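/- arXiv:2008.09143 — 2 statements merged into one kernel-verified Lean document; each statement's English description precedes it below -/
import Mathlib

section
/- Let c₀ ∈ (0,1) be the unique positive solution of e^{c/2+c²/4}·√(1−c) = 1/2. Then for every c ≥ c₀, the closure L̄_c of the set of limiting probabilities of first-order sentences in G(n,c/n) equals the whole interval [0,1]. -/
/-!
A graph `G(n, c/n)` has, in the limit, independent Poisson numbers of cycles of lengths
`3, 4, …, K + 2`, with means `lam c i = c ^ (i + 3) / (2 * (i + 3))`. For each fixed length `k` the
number of `k`-cycles being equal to a given `m` is a first-order property, so every finite sum of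
point masses ("atoms") of this limiting distribution is a limiting probability
(`sum_prod_pois_mem_limFOProbs`). It remains to see that, as `K` grows, these sums become dense in
`[0, 1]`.

*Poisson limit.* The product of falling factorials of the cycle counts counts families of
traversals of distinct cycles (`prod_descFactorial_eq`). Vertex-disjoint families give the main
term; overlapping ones span more edges than vertices (`card_famVerts_lt`) and contribute `O(1/n)`.
Hence all mixed factorial moments converge (`tendsto_moments`), and Bonferroni's inequalities,
applied to one cycle length at a time (`tendsto_sieve`), give the joint limit `tendsto_joint`.

*Density.* By a greedy argument (`exists_subset_sum_near`) it suffices that every atom is at most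
the total of the strictly smaller atoms, up to an arbitrarily small error (`exists_good_box`).
For `c ≥ 1` the total mean diverges with `K` and all atoms are small. For `c < 1`:

* the atom of "no short cycles" is about `exp (-∑ lam c i)`. The condition defining `c₀` says
  precisely that `∑ lam c₀ i = log 2`, so for `c ≥ c₀` this atom is at most one half up to a small
  error, and all other atoms are strictly smaller, with total mass about at least one half;
* for any other atom, replacing one of the longest occurring cycles by a longer one multiplies the
  atom by `m * lam c i' / lam c i`, where `m` is the number of these cycles. Take the two shortest
  lengths for which this factor is below one. Since `c ≥ 0.82`, the means decay slowly enough for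
  the two factors to add up to at least one (`atomP_le_of_ne_zero`).
-/

open Filter Topology FirstOrder

/-- Probability weight of a given graph outcome in `G(n,p)`. -/
noncomputable def gWeight (n : ℕ) (p : ℝ) (G : SimpleGraph (Fin n)) : ℝ :=
  p ^ G.edgeSet.ncard * (1 - p) ^ (n.choose 2 - G.edgeSet.ncard)

open scoped Classical in
/-- Probability of the event `A` under the binomial random graph `G(n,p)`. -/
noncomputable def gProb (n : ℕ) (p : ℝ) (A : SimpleGraph (Fin n) → Prop) : ℝ :=
  ∑ᶠ G : SimpleGraph (Fin n), if A G then gWeight n p G else 0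

/-- Satisfaction of a first-order sentence of the language of graphs in a simple graph. -/
def gSat {n : ℕ} (G : SimpleGraph (Fin n)) (φ : Language.graph.Sentence) : Prop :=
  @FirstOrder.Language.Sentence.Realize Language.graph (Fin n) G.structure φ

/-- `L_c`: the set of limiting probabilities of first-order sentences in `G(n, c/n)`. -/
noncomputable def limFOProbs (c : ℝ) : Set ℝ :=
  {x | ∃ φ : Language.graph.Sentence,
    Tendsto (fun n : ℕ => gProb n (min 1 (c / n)) (fun G => gSat G φ)) atTop (𝓝 x)}

section
open scoped Classical

/-! ### Expectations in the random graph -/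

/-- Expectation of `h` under `G(n,p)`. -/
noncomputable def gEx (n : ℕ) (p : ℝ) (h : SimpleGraph (Fin n) → ℝ) : ℝ :=
  ∑ G : SimpleGraph (Fin n), gWeight n p G * h G

lemma gProb_eq_gEx (n : ℕ) (p : ℝ) (A : SimpleGraph (Fin n) → Prop) :
    gProb n p A = gEx n p (fun G => if A G then 1 else 0) := by
  rw [gProb, finsum_eq_sum_of_fintype, gEx]
  refine Finset.sum_congr rfl fun G _ => ?_
  split_ifs <;> simp

lemma gWeight_nonneg {n : ℕ} {p : ℝ} (h0 : 0 ≤ p) (h1 : p ≤ 1) (G : SimpleGraph (Fin n)) :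
    0 ≤ gWeight n p G :=
  mul_nonneg (pow_nonneg h0 _) (pow_nonneg (by linarith) _)

lemma gEx_sum {n : ℕ} {p : ℝ} {ι : Type*} (s : Finset ι) (f : ι → SimpleGraph (Fin n) → ℝ) :
    gEx n p (fun G => ∑ i ∈ s, f i G) = ∑ i ∈ s, gEx n p (f i) := by
  simp only [gEx, Finset.mul_sum]
  exact Finset.sum_comm

lemma gEx_const_mul {n : ℕ} {p : ℝ} (a : ℝ) (f : SimpleGraph (Fin n) → ℝ) :
    gEx n p (fun G => a * f G) = a * gEx n p f := by
  simp only [gEx, Finset.mul_sum]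
  exact Finset.sum_congr rfl fun G _ => by ring

lemma gEx_edges {n : ℕ} (p : ℝ) (E : Finset (Sym2 (Fin n))) (hE : ∀ e ∈ E, ¬ e.IsDiag) :
    gEx n p (fun G => if (E : Set (Sym2 (Fin n))) ⊆ G.edgeSet then 1 else 0) = p ^ E.card := by
  set D : Finset (Sym2 (Fin n)) := (⊤ : SimpleGraph (Fin n)).edgeFinset with hD
  have hDcard : D.card = n.choose 2 := by
    rw [hD, SimpleGraph.card_edgeFinset_top_eq_card_choose_two, Fintype.card_fin]
  have hmemD : ∀ e, e ∈ D ↔ ¬ e.IsDiag := by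
    intro e; simp [hD]
  have hED : E ⊆ D := fun e he => (hmemD e).2 (hE e he)
  have hedge : ∀ T : Finset (Sym2 (Fin n)), T ⊆ D →
      (SimpleGraph.fromEdgeSet (T : Set (Sym2 (Fin n)))).edgeSet = T := by
    intro T hT
    rw [SimpleGraph.edgeSet_fromEdgeSet]
    ext e
    simp only [Set.mem_sdiff, Finset.mem_coe, Sym2.mem_diagSet, and_iff_left_iff_imp]
    exact fun h => (hmemD e).1 (hT h)
  have h1 : gEx n p (fun G => if (E : Set (Sym2 (Fin n))) ⊆ G.edgeSet then 1 else 0)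
      = ∑ T ∈ D.powerset, p ^ T.card * (1 - p) ^ (D.card - T.card) * (if E ⊆ T then 1 else 0) := by
    rw [gEx]
    refine Finset.sum_nbij' (fun G => G.edgeFinset)
      (fun T => SimpleGraph.fromEdgeSet (T : Set (Sym2 (Fin n)))) ?_ ?_ ?_ ?_ ?_
    · intro G _
      rw [Finset.mem_powerset, hD]
      exact SimpleGraph.edgeFinset_mono le_top
    · intro T _; exact Finset.mem_univ _
    · intro G _; simp
    · intro T hT
      have := hedge T (Finset.mem_powerset.1 hT)
      apply Finset.coe_injective
      rw [SimpleGraph.coe_edgeFinset, this]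
    · intro G _
      have h2 : G.edgeSet.ncard = G.edgeFinset.card := by
        rw [← SimpleGraph.coe_edgeFinset, Set.ncard_coe_finset]
      have h3 : ((E : Set (Sym2 (Fin n))) ⊆ G.edgeSet) ↔ E ⊆ G.edgeFinset := by
        rw [← SimpleGraph.coe_edgeFinset, Finset.coe_subset]
      simp only [gWeight, h2, h3, hDcard]
  rw [h1]
  have h2 : ∑ T ∈ D.powerset, p ^ T.card * (1 - p) ^ (D.card - T.card) * (if E ⊆ T then 1 else 0)
      = ∑ T ∈ (D \ E).powerset, p ^ E.card * (p ^ T.card * (1 - p) ^ ((D \ E).card - T.card)) := by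
    simp only [mul_ite, mul_one, mul_zero]
    rw [← Finset.sum_filter]
    refine Finset.sum_nbij' (fun T => T \ E) (fun T => T ∪ E) ?_ ?_ ?_ ?_ ?_
    · intro T hT
      simp only [Finset.mem_filter, Finset.mem_powerset] at hT ⊢
      exact Finset.sdiff_subset_sdiff hT.1 le_rfl
    · intro T hT
      simp only [Finset.mem_filter, Finset.mem_powerset] at hT ⊢
      exact ⟨Finset.union_subset (hT.trans Finset.sdiff_subset) hED, Finset.subset_union_right⟩
    · intro T hT
      simp only [Finset.mem_filter] at hT
      exact Finset.sdiff_union_of_subset hT.2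
    · intro T hT
      rw [Finset.mem_powerset] at hT
      rw [Finset.union_sdiff_right]
      exact Finset.sdiff_eq_self_of_disjoint
        (Finset.disjoint_of_subset_left hT Finset.sdiff_disjoint)
    · intro T hT
      simp only [Finset.mem_filter, Finset.mem_powerset] at hT
      have a1 := Finset.card_sdiff_add_card_eq_card hT.2
      have a2 := Finset.card_sdiff_add_card_eq_card hED
      have a3 := Finset.card_le_card hT.1
      rw [← mul_assoc, ← pow_add]
      congr 2 <;> omega
  rw [h2, ← Finset.mul_sum, Finset.sum_pow_mul_eq_add_pow]
  simp

lemma gEx_one {n : ℕ} (p : ℝ) : gEx n p (fun _ => 1) = 1 := by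
  simpa using gEx_edges (n := n) p ∅ (by simp)

/-! ### Cycles and their traversals -/

/-- The edge set of the closed walk `f 0, f 1, …, f (k-1), f 0`. -/
noncomputable def cycEdges {V : Type*} [DecidableEq V] {k : ℕ} [NeZero k] (f : ZMod k → V) :
    Finset (Sym2 V) :=
  Finset.univ.image fun a => s(f a, f (a + 1))

/-- `f` traverses a `k`-cycle of `G` (for `3 ≤ k`). -/
def IsCyc {V : Type*} [DecidableEq V] {k : ℕ} [NeZero k] (G : SimpleGraph V) (f : ZMod k → V) :
    Prop :=
  Function.Injective f ∧ (cycEdges f : Set (Sym2 V)) ⊆ G.edgeSet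

lemma two_ne_zero_zmod {k : ℕ} (hk : 3 ≤ k) : (2 : ZMod k) ≠ 0 := by
  intro h
  have : ((2 : ℕ) : ZMod k) = 0 := by exact_mod_cast h
  rw [ZMod.natCast_eq_zero_iff] at this
  have := Nat.le_of_dvd (by norm_num) this
  omega

lemma add_one_ne_sub_one {k : ℕ} (hk : 3 ≤ k) (a : ZMod k) : a + 1 ≠ a - 1 := by
  intro h
  apply two_ne_zero_zmod hk
  linear_combination h

section
variable {V : Type*} [DecidableEq V] {k : ℕ} [NeZero k]

lemma isCyc_iff (G : SimpleGraph V) (f : ZMod k → V) :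
    IsCyc G f ↔ Function.Injective f ∧ ∀ a, G.Adj (f a) (f (a + 1)) := by
  simp [IsCyc, cycEdges, Set.range_subset_iff]

lemma mem_cycEdges {f : ZMod k → V} (hf : Function.Injective f) (b : ZMod k) (y : V) :
    s(f b, y) ∈ cycEdges f ↔ y = f (b + 1) ∨ y = f (b - 1) := by
  simp only [cycEdges, Finset.mem_image, Finset.mem_univ, true_and, Sym2.eq_iff]
  constructor
  · rintro ⟨a, ⟨h1, h2⟩ | ⟨h1, h2⟩⟩
    · left; rw [← h2, hf h1]
    · right; rw [← h1, ← hf h2]; simp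
  · rintro (h | h)
    · exact ⟨b, Or.inl ⟨rfl, h.symm⟩⟩
    · exact ⟨b - 1, Or.inr ⟨h.symm, by simp⟩⟩

lemma card_cycEdges (hk : 3 ≤ k) {f : ZMod k → V} (hf : Function.Injective f) :
    (cycEdges f).card = k := by
  rw [cycEdges, Finset.card_image_of_injective, Finset.card_univ, ZMod.card]
  intro a b hab
  rcases Sym2.eq_iff.1 hab with ⟨h, _⟩ | ⟨h1, h2⟩
  · exact hf h
  · exfalso
    have h1 := hf h1
    have h2 := hf h2
    apply two_ne_zero_zmod hk
    linear_combination h2 - h1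

lemma not_isDiag_of_mem_cycEdges (hk : 3 ≤ k) {f : ZMod k → V} (hf : Function.Injective f)
    {e : Sym2 V} (he : e ∈ cycEdges f) : ¬ e.IsDiag := by
  obtain ⟨a, -, rfl⟩ := Finset.mem_image.1 he
  rw [Sym2.mk_isDiag_iff]
  intro h
  have h := hf h
  have : (1 : ZMod k) = 0 := by linear_combination -h
  exact two_ne_zero_zmod hk (by linear_combination 2 * this)

lemma cycEdges_shift (f : ZMod k → V) (a : ZMod k) :
    cycEdges (fun i => f (a + i)) = cycEdges f := by
  ext e
  simp only [cycEdges, Finset.mem_image, Finset.mem_univ, true_and]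
  constructor
  · rintro ⟨i, rfl⟩; exact ⟨a + i, by rw [add_assoc]⟩
  · rintro ⟨i, rfl⟩; exact ⟨i - a, by rw [← add_assoc]; simp⟩

lemma cycEdges_neg (f : ZMod k → V) (a : ZMod k) :
    cycEdges (fun i => f (a - i)) = cycEdges f := by
  ext e
  simp only [cycEdges, Finset.mem_image, Finset.mem_univ, true_and]
  constructor
  · rintro ⟨i, rfl⟩
    refine ⟨a - i - 1, ?_⟩
    rw [show a - i - 1 + 1 = a - i by ring, show a - (i + 1) = a - i - 1 by ring]
    exact Sym2.eq_swap
  · rintro ⟨i, rfl⟩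
    refine ⟨a - i - 1, ?_⟩
    rw [show a - (a - i - 1) = i + 1 by ring, show a - (a - i - 1 + 1) = i by ring]
    exact Sym2.eq_swap

/-- Two injective traversals with the same edge set differ by a rotation and possibly a
reflection. -/
lemma exists_of_cycEdges_eq (hk : 3 ≤ k) {f g : ZMod k → V} (hf : Function.Injective f)
    (hg : Function.Injective g) (h : cycEdges f = cycEdges g) :
    ∃ (b : ZMod k) (σ : Bool), f = fun i => g (b + (if σ then i else -i)) := by
  have hmem : ∀ i, s(f i, f (i + 1)) ∈ cycEdges g := fun i => by
    rw [← h]; exact Finset.mem_image_of_mem _ (Finset.mem_univ i)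
  obtain ⟨b, hb⟩ : ∃ b, f 0 = g b := by
    obtain ⟨a, -, ha⟩ := Finset.mem_image.1 (hmem 0)
    rcases Sym2.eq_iff.1 ha with ⟨h, _⟩ | ⟨_, h⟩
    · exact ⟨_, h.symm⟩
    · exact ⟨_, h.symm⟩
  have h1 : ∃ σ : ZMod k, (σ = 1 ∨ σ = -1) ∧ f 1 = g (b + σ) := by
    have := hmem 0
    rw [hb, mem_cycEdges hg, zero_add] at this
    rcases this with h | h
    · exact ⟨1, Or.inl rfl, h⟩
    · exact ⟨-1, Or.inr rfl, by rw [h, sub_eq_add_neg]⟩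
  obtain ⟨σ, hσ, h1⟩ := h1
  have key : ∀ m : ℕ, f m = g (b + σ * m) ∧ f (m + 1) = g (b + σ * (m + 1)) := by
    intro m
    induction m with
    | zero => simpa using ⟨hb, h1⟩
    | succ m ih =>
      obtain ⟨ih1, ih2⟩ := ih
      push_cast
      refine ⟨ih2, ?_⟩
      have := hmem (m + 1)
      rw [ih2, mem_cycEdges hg] at this
      have hne : f ((m : ZMod k) + 1 + 1) ≠ f m := fun hh => by
        have := hf hh
        exact two_ne_zero_zmod hk (by linear_combination this)
      rw [ih1] at hne
      rcases hσ with rfl | rfl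
      · rcases this with h | h
        · rw [h]; congr 1; ring
        · exact absurd (by rw [h]; congr 1; ring) hne
      · rcases this with h | h
        · exact absurd (by rw [h]; congr 1; ring) hne
        · rw [h]; congr 1; ring
  have key' : ∀ i, f i = g (b + σ * i) := fun i => by
    have := (key i.val).1
    rwa [ZMod.natCast_zmod_val] at this
  rcases hσ with rfl | rfl
  · exact ⟨b, true, by funext i; rw [key']; simp⟩
  · exact ⟨b, false, by funext i; rw [key']; simp⟩

/-- A `k`-cycle has exactly `2 * k` traversals. -/
lemma card_traversals [Fintype V] (hk : 3 ≤ k) {g : ZMod k → V} (hg : Function.Injective g) :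
    (Finset.univ.filter fun f : ZMod k → V =>
      Function.Injective f ∧ cycEdges f = cycEdges g).card = 2 * k := by
  have : (Finset.univ.filter fun f : ZMod k → V =>
      Function.Injective f ∧ cycEdges f = cycEdges g) =
      (Finset.univ : Finset (ZMod k × Bool)).image
        (fun q => fun i => g (q.1 + (if q.2 then i else -i))) := by
    ext f
    simp only [Finset.mem_filter, Finset.mem_univ, true_and, Finset.mem_image, Prod.exists]
    constructor
    · rintro ⟨hf, h⟩
      obtain ⟨b, σ, rfl⟩ := exists_of_cycEdges_eq hk hf hg h
      exact ⟨b, σ, rfl⟩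
    · rintro ⟨b, σ, rfl⟩
      refine ⟨fun i j hij => ?_, ?_⟩
      · have := add_left_cancel (hg hij)
        cases σ <;> simpa using this
      · cases σ
        · simpa [← sub_eq_add_neg] using cycEdges_neg g b
        · simpa using cycEdges_shift g b
  rw [this, Finset.card_image_of_injective, Finset.card_univ, Fintype.card_prod, ZMod.card,
    Fintype.card_bool, mul_comm]
  rintro ⟨b, σ⟩ ⟨b', σ'⟩ h
  have h0 := hg (congrFun h 0)
  have h1 := hg (congrFun h 1)
  simp only [neg_zero, ite_self, add_zero] at h0
  subst h0
  have h1 := add_left_cancel h1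
  have h3 : (1 : ZMod k) ≠ -1 := fun hh =>
    two_ne_zero_zmod hk (by linear_combination hh)
  cases σ <;> cases σ'
  · rfl
  · exact absurd (by simpa using h1.symm) h3
  · exact absurd (by simpa using h1) h3
  · rfl
end

section
variable {V : Type*} [Fintype V] [DecidableEq V] {ι : Type*} [Fintype ι] {k : ι → ℕ}
    [∀ q, NeZero (k q)]

/-- Edges of the union of a family of closed walks. -/
noncomputable def famEdges {V : Type*} [DecidableEq V] {ι : Type*} [Fintype ι] {k : ι → ℕ}
    [∀ q, NeZero (k q)] (F : ∀ q, ZMod (k q) → V) : Finset (Sym2 V) :=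
  Finset.univ.biUnion fun q => cycEdges (F q)

/-- Vertices of the union of a family of closed walks. -/
noncomputable def famVerts {V : Type*} [DecidableEq V] {ι : Type*} [Fintype ι] {k : ι → ℕ}
    [∀ q, NeZero (k q)] (F : ∀ q, ZMod (k q) → V) : Finset V :=
  Finset.univ.biUnion fun q => Finset.univ.image (F q)

/-- Distinct cycles that are not pairwise vertex-disjoint span more edges than vertices: every
vertex of the union has degree at least two, and if all the degrees were two then cycles sharing
a vertex would coincide. -/
lemma card_famVerts_lt (hk : ∀ q, 3 ≤ k q) {F : ∀ q, ZMod (k q) → V}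
    (hF : ∀ q, Function.Injective (F q)) (hE : Function.Injective fun q => cycEdges (F q))
    {q q' : ι} (hqq : q ≠ q') {a : ZMod (k q)} {b : ZMod (k q')} (hab : F q a = F q' b) :
    (famVerts F).card < (famEdges F).card := by
  by_contra! hlt
  set H := SimpleGraph.fromEdgeSet (famEdges F : Set (Sym2 V)) with hH
  have hnd : ∀ e ∈ famEdges F, ¬ e.IsDiag := by
    intro e he
    obtain ⟨q, -, hq⟩ := Finset.mem_biUnion.1 he
    exact not_isDiag_of_mem_cycEdges (hk q) (hF q) hq
  have hHe : H.edgeFinset = famEdges F := by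
    apply Finset.coe_injective
    rw [SimpleGraph.coe_edgeFinset, hH, SimpleGraph.edgeSet_fromEdgeSet]
    ext e
    simp only [Set.mem_sdiff, Finset.mem_coe, Sym2.mem_diagSet, and_iff_left_iff_imp]
    exact hnd e
  have hadj : ∀ x y, y ∈ H.neighborFinset x ↔ s(x, y) ∈ famEdges F := by
    intro x y
    rw [SimpleGraph.mem_neighborFinset, ← hHe, SimpleGraph.mem_edgeFinset,
      SimpleGraph.mem_edgeSet]
  have hnb : ∀ q a, ({F q (a + 1), F q (a - 1)} : Finset V) ⊆ H.neighborFinset (F q a) := by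
    intro q a y hy
    rw [hadj]
    refine Finset.mem_biUnion.2 ⟨q, Finset.mem_univ _, (mem_cycEdges (hF q) _ _).2 ?_⟩
    simpa using hy
  have hpair : ∀ q a, ({F q (a + 1), F q (a - 1)} : Finset V).card = 2 := fun q a =>
    Finset.card_pair fun h => add_one_ne_sub_one (hk q) a (hF q h)
  have hdeg : ∀ v ∈ famVerts F, 2 ≤ H.degree v := by
    intro v hv
    obtain ⟨q, -, hq⟩ := Finset.mem_biUnion.1 hv
    obtain ⟨a, -, rfl⟩ := Finset.mem_image.1 hq
    rw [← hpair q a, ← SimpleGraph.card_neighborFinset_eq_degree]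
    exact Finset.card_le_card (hnb q a)
  have hsum : ∑ v ∈ famVerts F, H.degree v ≤ ∑ v ∈ famVerts F, 2 := by
    calc ∑ v ∈ famVerts F, H.degree v ≤ ∑ v, H.degree v :=
          Finset.sum_le_sum_of_subset (Finset.subset_univ _)
      _ = 2 * (famEdges F).card := by
          rw [SimpleGraph.sum_degrees_eq_twice_card_edges]
          congr 2
          convert hHe
      _ ≤ 2 * (famVerts F).card := by omega
      _ = _ := by simp [mul_comm]
  have heq : ∀ v ∈ famVerts F, 2 = H.degree v :=
    (Finset.sum_eq_sum_iff_of_le hdeg).1 (le_antisymm (Finset.sum_le_sum hdeg) hsum)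
  have hnb' : ∀ q a y, s(F q a, y) ∈ famEdges F → y = F q (a + 1) ∨ y = F q (a - 1) := by
    intro q a y hy
    have h1 : ({F q (a + 1), F q (a - 1)} : Finset V) = H.neighborFinset (F q a) := by
      apply Finset.eq_of_subset_of_card_le (hnb q a)
      rw [hpair, SimpleGraph.card_neighborFinset_eq_degree, ← heq]
      exact Finset.mem_biUnion.2 ⟨q, Finset.mem_univ _, Finset.mem_image_of_mem _ (Finset.mem_univ _)⟩
    have h2 := (hadj _ _).2 hy
    rw [← h1] at h2
    simpa using h2
  have hmem : ∀ q a, s(F q a, F q (a + 1)) ∈ famEdges F := fun q a =>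
    Finset.mem_biUnion.2 ⟨q, Finset.mem_univ _, Finset.mem_image_of_mem _ (Finset.mem_univ _)⟩
  -- following the cycle `F q` from a common vertex never leaves `F q'`
  have hsub : ∀ q q' a b, F q a = F q' b → cycEdges (F q) ⊆ cycEdges (F q') := by
    intro q q' a b hab
    have step : ∀ i j, F q i = F q' j → ∃ j', F q (i + 1) = F q' j' := by
      intro i j hij
      have := hmem q i
      rw [hij] at this
      rcases hnb' _ _ _ this with h | h
      · exact ⟨_, h⟩
      · exact ⟨_, h⟩
    have h1 : ∀ m : ℕ, ∃ j, F q (a + m) = F q' j := by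
      intro m
      induction m with
      | zero => exact ⟨b, by simpa using hab⟩
      | succ m ih =>
        obtain ⟨j, hj⟩ := ih
        obtain ⟨j', hj'⟩ := step _ _ hj
        exact ⟨j', by push_cast; rw [← add_assoc]; exact hj'⟩
    have h2 : ∀ i, ∃ j, F q i = F q' j := by
      intro i
      obtain ⟨j, hj⟩ := h1 (i - a).val
      rw [ZMod.natCast_zmod_val] at hj
      exact ⟨j, by rw [← hj]; congr 1; ring⟩
    intro e he
    obtain ⟨i, -, rfl⟩ := Finset.mem_image.1 he
    obtain ⟨j, hj⟩ := h2 i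
    have := hmem q i
    rw [hj] at this ⊢
    exact (mem_cycEdges (hF q') _ _).2 (hnb' _ _ _ this)
  exact hqq (hE (Finset.Subset.antisymm (hsub _ _ _ _ hab) (hsub _ _ _ _ hab.symm)))

end

/-- Vertex-disjoint cycles span as many edges as vertices. -/
lemma card_famEdges {V : Type*} [DecidableEq V] {ι : Type*} [Fintype ι] {k : ι → ℕ}
    [∀ q, NeZero (k q)]
    (hk : ∀ q, 3 ≤ k q) {F : ∀ q, ZMod (k q) → V}
    (hF : ∀ q, Function.Injective (F q))
    (hd : ∀ q q' a b, F q a = F q' b → q = q') :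
    (famEdges F).card = ∑ q, k q := by
  rw [famEdges, Finset.card_biUnion]
  · exact Finset.sum_congr rfl fun q _ => card_cycEdges (hk q) (hF q)
  · intro q _ q' _ hqq
    refine Finset.disjoint_left.2 ?_
    intro e h1 h2
    obtain ⟨a, -, rfl⟩ := Finset.mem_image.1 h1
    obtain ⟨b, -, h⟩ := Finset.mem_image.1 h2
    rcases Sym2.eq_iff.1 h with ⟨h, _⟩ | ⟨h, _⟩
    · exact hqq (hd _ _ _ _ h.symm)
    · exact hqq (hd _ _ _ _ h.symm)

/-! ### Counting families of cycles -/

lemma tendsto_descFactorial_mul (c : ℝ) (s : ℕ) :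
    Tendsto (fun n : ℕ => (n.descFactorial s : ℝ) * (c / n) ^ s) atTop (𝓝 (c ^ s)) := by
  induction s with
  | zero => simp
  | succ s ih =>
    have h1 : Tendsto (fun n : ℕ => c - s * (c / n)) atTop (𝓝 c) := by
      have := (tendsto_const_div_atTop_nhds_zero_nat c).const_mul (s : ℝ)
      simpa using this.const_sub c
    have h2 := ih.mul h1
    rw [pow_succ]
    refine h2.congr' ?_
    filter_upwards [eventually_ge_atTop (s + 1)] with n hn
    have hn0 : (n : ℝ) ≠ 0 := Nat.cast_ne_zero.2 (by omega)
    rw [Nat.descFactorial_succ, Nat.cast_mul, Nat.cast_sub (by omega), pow_succ]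
    have : (n : ℝ) * (c / n) = c := by field_simp
    linear_combination (-(n.descFactorial s : ℝ) * (c / n) ^ s) * this

/-- The edge probability `min 1 (c / n)`. -/
noncomputable def edgeP (c : ℝ) (n : ℕ) : ℝ := min 1 (c / n)

lemma edgeP_nonneg {c : ℝ} (hc : 0 < c) (n : ℕ) : 0 ≤ edgeP c n :=
  le_min zero_le_one (by positivity)

lemma edgeP_le_one (c : ℝ) (n : ℕ) : edgeP c n ≤ 1 := min_le_left _ _

lemma edgeP_mul_le {c : ℝ} (hc : 0 < c) (n : ℕ) : n * edgeP c n ≤ c := by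
  rcases Nat.eq_zero_or_pos n with rfl | h
  · simpa using hc.le
  · have : (0 : ℝ) < n := by exact_mod_cast h
    calc n * edgeP c n ≤ n * (c / n) := mul_le_mul_of_nonneg_left (min_le_right _ _) this.le
      _ = c := by field_simp

lemma edgeP_eventually (c : ℝ) : ∀ᶠ n : ℕ in atTop, edgeP c n = c / n := by
  have := (tendsto_const_div_atTop_nhds_zero_nat c).eventually_le_const (zero_lt_one)
  filter_upwards [this] with n hn
  exact min_eq_right hn

lemma edgeP_tendsto (c : ℝ) : Tendsto (edgeP c) atTop (𝓝 0) :=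
  (tendsto_const_div_atTop_nhds_zero_nat c).congr' ((edgeP_eventually c).mono fun _ h => h.symm)

section
variable {ι : Type*} {k : ι → ℕ}

/-- Families of traversals of pairwise vertex-disjoint cycles. -/
def DisjFam {V : Type*} (F : ∀ q, ZMod (k q) → V) : Prop :=
  Function.Injective fun x : (Σ q, ZMod (k q)) => F x.1 x.2

lemma DisjFam.inj {V : Type*} {F : ∀ q, ZMod (k q) → V} (h : DisjFam F) (q : ι) :
    Function.Injective (F q) := fun a b hab => by
  have := @h ⟨q, a⟩ ⟨q, b⟩ hab
  simpa using this

lemma DisjFam.eq {V : Type*} {F : ∀ q, ZMod (k q) → V} (h : DisjFam F) (q q' : ι)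
    (a : ZMod (k q)) (b : ZMod (k q')) (hab : F q a = F q' b) : q = q' :=
  congrArg Sigma.fst (@h ⟨q, a⟩ ⟨q', b⟩ hab)

variable [∀ q, NeZero (k q)]

/-- Families of traversals of pairwise distinct cycles. -/
def GoodFam {V : Type*} [DecidableEq V] (F : ∀ q, ZMod (k q) → V) : Prop :=
  (∀ q, Function.Injective (F q)) ∧ Function.Injective fun q => cycEdges (F q)

lemma DisjFam.good {V : Type*} [DecidableEq V] {F : ∀ q, ZMod (k q) → V} (h : DisjFam F) : GoodFam F := by
  refine ⟨h.inj, fun q q' hqq => ?_⟩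
  have h0 : s(F q 0, F q (0 + 1)) ∈ cycEdges (F q') := by
    have : s(F q 0, F q (0 + 1)) ∈ cycEdges (F q) :=
      Finset.mem_image_of_mem _ (Finset.mem_univ _)
    rwa [show cycEdges (F q) = cycEdges (F q') from hqq] at this
  obtain ⟨b, -, hb⟩ := Finset.mem_image.1 h0
  rcases Sym2.eq_iff.1 hb with ⟨h1, _⟩ | ⟨_, h1⟩
  · exact h.eq _ _ _ _ h1.symm
  · exact h.eq _ _ _ _ h1.symm

variable [Fintype ι]

lemma card_disjFam (n : ℕ) :
    (Finset.univ.filter fun F : ∀ q, ZMod (k q) → Fin n => DisjFam F).card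
      = n.descFactorial (∑ q, k q) := by
  have h1 : (Finset.univ.filter fun F : ∀ q, ZMod (k q) → Fin n => DisjFam F).card
      = Fintype.card ((Σ q, ZMod (k q)) ↪ Fin n) := by
    rw [← Fintype.card_subtype]
    refine Fintype.card_congr
      ⟨fun F => ⟨fun x => F.1 x.1 x.2, F.2⟩, fun e => ⟨fun q a => e ⟨q, a⟩, ?_⟩, ?_, ?_⟩
    · exact e.injective
    · intro F; rfl
    · intro e; rfl
  rw [h1, Fintype.card_embedding_eq, Fintype.card_fin, Fintype.card_sigma]
  simp [ZMod.card]

lemma card_famVerts_eq_le (n v : ℕ) :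
    (Finset.univ.filter fun F : ∀ q, ZMod (k q) → Fin n => (famVerts F).card = v).card
      ≤ n ^ v * v ^ (∑ q, k q) := by
  have h1 : (Finset.univ.filter fun F : ∀ q, ZMod (k q) → Fin n => (famVerts F).card = v) ⊆
      (Finset.powersetCard v Finset.univ).biUnion fun S =>
        Fintype.piFinset fun q => Fintype.piFinset fun _ : ZMod (k q) => S := by
    intro F hF
    simp only [Finset.mem_filter, Finset.mem_univ, true_and] at hF
    refine Finset.mem_biUnion.2 ⟨famVerts F, Finset.mem_powersetCard.2 ⟨Finset.subset_univ _, hF⟩, ?_⟩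
    refine Fintype.mem_piFinset.2 fun q => Fintype.mem_piFinset.2 fun a => ?_
    exact Finset.mem_biUnion.2 ⟨q, Finset.mem_univ _, Finset.mem_image_of_mem _ (Finset.mem_univ _)⟩
  refine (Finset.card_le_card h1).trans (Finset.card_biUnion_le.trans ?_)
  have h2 : ∀ S ∈ Finset.powersetCard v (Finset.univ : Finset (Fin n)),
      (Fintype.piFinset fun q => Fintype.piFinset fun _ : ZMod (k q) => S).card
        = v ^ (∑ q, k q) := by
    intro S hS
    rw [Fintype.card_piFinset]
    simp only [Fintype.card_piFinset, (Finset.mem_powersetCard.1 hS).2, Finset.prod_const,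
      Finset.card_univ, ZMod.card]
    exact Finset.prod_pow_eq_pow_sum _ _ _
  rw [Finset.sum_congr rfl h2, Finset.sum_const, Finset.card_powersetCard, Finset.card_univ,
    Fintype.card_fin, smul_eq_mul]
  exact Nat.mul_le_mul_right _ (Nat.choose_le_pow n v)

lemma card_famVerts_le (n : ℕ) (F : ∀ q, ZMod (k q) → Fin n) :
    (famVerts F).card ≤ ∑ q, k q := by
  refine Finset.card_biUnion_le.trans (Finset.sum_le_sum fun q _ => ?_)
  exact Finset.card_image_le.trans (by simp [ZMod.card])

/-- Overlapping families of distinct cycles contribute a vanishing amount to the moments. -/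
lemma sum_bad_le (hk : ∀ q, 3 ≤ k q) {c : ℝ} (hc : 0 < c) (n : ℕ) :
    ∑ F : ∀ q, ZMod (k q) → Fin n with GoodFam F ∧ ¬ DisjFam F, edgeP c n ^ (famEdges F).card
      ≤ (∑ v ∈ Finset.range (∑ q, k q + 1), c ^ v * (v : ℝ) ^ (∑ q, k q)) * edgeP c n := by
  have hp0 := edgeP_nonneg hc n
  have hp1 := edgeP_le_one c n
  calc ∑ F : ∀ q, ZMod (k q) → Fin n with GoodFam F ∧ ¬ DisjFam F, edgeP c n ^ (famEdges F).card
      ≤ ∑ F : ∀ q, ZMod (k q) → Fin n with GoodFam F ∧ ¬ DisjFam F,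
          edgeP c n ^ ((famVerts F).card + 1) := by
        refine Finset.sum_le_sum fun F hF => ?_
        simp only [Finset.mem_filter, Finset.mem_univ, true_and] at hF
        obtain ⟨⟨hinj, hE⟩, hnd⟩ := hF
        apply pow_le_pow_of_le_one hp0 hp1
        rw [DisjFam, Function.Injective] at hnd
        push Not at hnd
        obtain ⟨⟨q, a⟩, ⟨q', b⟩, hab, hne⟩ := hnd
        by_cases hqq : q = q'
        · subst hqq
          exact absurd (congrArg (Sigma.mk q) (hinj q hab)) hne
        · exact card_famVerts_lt hk hinj hE hqq hab
    _ ≤ ∑ F : ∀ q, ZMod (k q) → Fin n, edgeP c n ^ ((famVerts F).card + 1) :=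
        Finset.sum_le_sum_of_subset_of_nonneg (Finset.subset_univ _)
          fun _ _ _ => pow_nonneg hp0 _
    _ = ∑ v ∈ Finset.range (∑ q, k q + 1), ∑ F : ∀ q, ZMod (k q) → Fin n with
          (famVerts F).card = v, edgeP c n ^ ((famVerts F).card + 1) := by
        refine (Finset.sum_fiberwise_of_maps_to (fun F _ => ?_) _).symm
        exact Finset.mem_range.2 (Nat.lt_succ_of_le (card_famVerts_le n F))
    _ ≤ ∑ v ∈ Finset.range (∑ q, k q + 1),
          (c ^ v * (v : ℝ) ^ (∑ q, k q)) * edgeP c n := by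
        refine Finset.sum_le_sum fun v _ => ?_
        have h1 : ∑ F : ∀ q, ZMod (k q) → Fin n with
          (famVerts F).card = v, edgeP c n ^ ((famVerts F).card + 1)
          = ((Finset.univ.filter fun F : ∀ q, ZMod (k q) → Fin n =>
              (famVerts F).card = v).card : ℝ) * edgeP c n ^ (v + 1) := by
          rw [← nsmul_eq_mul, ← Finset.sum_const]
          refine Finset.sum_congr rfl fun F hF => ?_
          rw [(Finset.mem_filter.1 hF).2]
        rw [h1]
        have h2 : ((Finset.univ.filter fun F : ∀ q, ZMod (k q) → Fin n =>
              (famVerts F).card = v).card : ℝ) ≤ (n : ℝ) ^ v * (v : ℝ) ^ (∑ q, k q) := by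
          exact_mod_cast card_famVerts_eq_le n v
        calc _ ≤ ((n : ℝ) ^ v * (v : ℝ) ^ (∑ q, k q)) * edgeP c n ^ (v + 1) :=
              mul_le_mul_of_nonneg_right h2 (pow_nonneg hp0 _)
          _ = ((n * edgeP c n) ^ v * (v : ℝ) ^ (∑ q, k q)) * edgeP c n := by
              rw [mul_pow, pow_succ]; ring
          _ ≤ _ := by
              gcongr
              exact edgeP_mul_le hc n
    _ = _ := by rw [Finset.sum_mul]

/-- The expected number of families of distinct labelled cycles of prescribed lengths. -/
lemma tendsto_sum_goodFam (hk : ∀ q, 3 ≤ k q) {c : ℝ} (hc : 0 < c) :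
    Tendsto (fun n : ℕ => ∑ F : ∀ q, ZMod (k q) → Fin n with GoodFam F,
      edgeP c n ^ (famEdges F).card) atTop (𝓝 (c ^ ∑ q, k q)) := by
  have hsplit : ∀ n : ℕ, ∑ F : ∀ q, ZMod (k q) → Fin n with GoodFam F,
      edgeP c n ^ (famEdges F).card
      = (n.descFactorial (∑ q, k q) : ℝ) * edgeP c n ^ (∑ q, k q)
        + ∑ F : ∀ q, ZMod (k q) → Fin n with GoodFam F ∧ ¬ DisjFam F,
            edgeP c n ^ (famEdges F).card := by
    intro n
    rw [← Finset.sum_filter_add_sum_filter_not _ (fun F => DisjFam F), Finset.filter_filter,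
      Finset.filter_filter]
    congr 1
    rw [← card_disjFam, ← nsmul_eq_mul, ← Finset.sum_const]
    refine Finset.sum_congr ?_ fun F hF => ?_
    · ext F
      simp only [Finset.mem_filter, Finset.mem_univ, true_and]
      exact ⟨fun h => h.2, fun h => ⟨h.good, h⟩⟩
    · have := (Finset.mem_filter.1 hF).2
      rw [card_famEdges hk this.inj this.eq]
  have h1 : Tendsto (fun n : ℕ => (n.descFactorial (∑ q, k q) : ℝ) * edgeP c n ^ (∑ q, k q))
      atTop (𝓝 (c ^ ∑ q, k q)) := by
    refine (tendsto_descFactorial_mul c _).congr' ?_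
    filter_upwards [edgeP_eventually c] with n hn
    rw [hn]
  have h2 : Tendsto (fun n : ℕ => ∑ F : ∀ q, ZMod (k q) → Fin n with GoodFam F ∧ ¬ DisjFam F,
            edgeP c n ^ (famEdges F).card) atTop (𝓝 0) := by
    refine squeeze_zero (fun n => Finset.sum_nonneg fun F _ => pow_nonneg (edgeP_nonneg hc n) _)
      (fun n => sum_bad_le hk hc n) ?_
    simpa using (edgeP_tendsto c).const_mul
      (∑ v ∈ Finset.range (∑ q, k q + 1), c ^ v * (v : ℝ) ^ (∑ q, k q))
  simp only [hsplit]
  simpa using h1.add h2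
end

/-! ### Factorial moments of the cycle counts -/

/-- If the fibres of `E` on `S` all have `m` elements, the number of `r`-tuples in `S` with distinct
images is `m ^ r` times a falling factorial of the number of images. -/
lemma card_tuples {α β : Type*} [Fintype α] [DecidableEq α] [DecidableEq β] (S : Finset α) (E : α → β) (m : ℕ)
    (hm : ∀ a ∈ S, (S.filter fun a' => E a' = E a).card = m) (r : ℕ) :
    (Finset.univ.filter fun f : Fin r → α =>
      (∀ t, f t ∈ S) ∧ Function.Injective fun t => E (f t)).card
      = m ^ r * (S.image E).card.descFactorial r := by
  have h1 : Fintype.card (Fin r ↪ S.image E) = (S.image E).card.descFactorial r := by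
    rw [Fintype.card_embedding_eq, Fintype.card_coe, Fintype.card_fin]
  rw [← h1, mul_comm, ← Finset.card_univ, ← smul_eq_mul, ← Finset.sum_const]
  have h2 : (Finset.univ.filter fun f : Fin r → α =>
      (∀ t, f t ∈ S) ∧ Function.Injective fun t => E (f t)) =
      (Finset.univ : Finset (Fin r ↪ S.image E)).biUnion fun e =>
        Fintype.piFinset fun t => S.filter fun a => E a = e t := by
    ext f
    simp only [Finset.mem_filter, Finset.mem_univ, true_and, Finset.mem_biUnion,
      Fintype.mem_piFinset]
    constructor
    · rintro ⟨hS, hi⟩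
      refine ⟨⟨fun t => ⟨E (f t), Finset.mem_image_of_mem _ (hS t)⟩, fun t t' h => ?_⟩,
        fun t => ⟨hS t, rfl⟩⟩
      exact hi (congrArg Subtype.val h)
    · rintro ⟨e, he⟩
      refine ⟨fun t => (he t).1, fun t t' h => ?_⟩
      apply e.injective
      apply Subtype.ext
      rw [← (he t).2, ← (he t').2]
      exact h
  rw [h2, Finset.card_biUnion]
  · refine Finset.sum_congr rfl fun e _ => ?_
    rw [Fintype.card_piFinset]
    have : ∀ t, (S.filter fun a => E a = e t).card = m := by
      intro t
      obtain ⟨a, ha, hae⟩ := Finset.mem_image.1 (e t).2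
      rw [← hae]
      exact hm a ha
    simp [this]
  · intro e _ e' _ hne
    refine Finset.disjoint_left.2 fun f hf hf' => hne ?_
    ext t
    have h := (Finset.mem_filter.1 (Fintype.mem_piFinset.1 hf t)).2
    have h' := (Finset.mem_filter.1 (Fintype.mem_piFinset.1 hf' t)).2
    rw [← h, ← h']

/-- Number of `k`-cycles of `G`, each cycle being identified with its edge set. -/
noncomputable def numCyc {n : ℕ} (k : ℕ) [NeZero k] (G : SimpleGraph (Fin n)) : ℕ :=
  ((Finset.univ.filter fun f : ZMod k → Fin n => IsCyc G f).image cycEdges).card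

lemma card_fiber_isCyc {n k : ℕ} [NeZero k] (hk : 3 ≤ k) (G : SimpleGraph (Fin n))
    (g : ZMod k → Fin n) (hg : g ∈ Finset.univ.filter fun f : ZMod k → Fin n => IsCyc G f) :
    ((Finset.univ.filter fun f : ZMod k → Fin n => IsCyc G f).filter
      fun f => cycEdges f = cycEdges g).card = 2 * k := by
  have hg' : IsCyc G g := (Finset.mem_filter.1 hg).2
  rw [← card_traversals hk hg'.1, Finset.filter_filter]
  congr 1
  ext f
  simp only [Finset.mem_filter, Finset.mem_univ, true_and]
  exact ⟨fun h => ⟨h.1.1, h.2⟩, fun h => ⟨⟨h.1, by rw [h.2]; exact hg'.2⟩, h.2⟩⟩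

lemma card_isCyc {n k : ℕ} [NeZero k] (hk : 3 ≤ k) (G : SimpleGraph (Fin n)) :
    (Finset.univ.filter fun f : ZMod k → Fin n => IsCyc G f).card = 2 * k * numCyc k G := by
  have := card_tuples _ cycEdges (2 * k) (card_fiber_isCyc hk G) 1
  rw [pow_one, Nat.descFactorial_one] at this
  rw [numCyc, ← this]
  refine Finset.card_bij (fun f _ _ => f) ?_ ?_ ?_
  · intro f hf
    refine Finset.mem_filter.2 ⟨Finset.mem_univ _, fun _ => hf, fun a b _ => Subsingleton.elim _ _⟩
  · intro f _ g _ h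
    exact congrFun h 0
  · intro f hf
    exact ⟨f 0, (Finset.mem_filter.1 hf).2.1 0, by funext t; rw [Subsingleton.elim t 0]⟩

section
variable {K : ℕ} (r : Fin K → ℕ)

/-- A product of falling factorials of the cycle counts, as a count of families of traversals of
distinct cycles. -/
lemma prod_descFactorial_eq {n : ℕ} (G : SimpleGraph (Fin n)) :
    (∏ i : Fin K, ((2 * ((i : ℕ) + 3) : ℕ) : ℝ) ^ r i) *
      ∏ i : Fin K, ((numCyc ((i : ℕ) + 3) G).descFactorial (r i) : ℝ)
    = ∑ F : ∀ q : (Σ i : Fin K, Fin (r i)), ZMod ((q.1 : ℕ) + 3) → Fin n with GoodFam F,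
        if (famEdges F : Set (Sym2 (Fin n))) ⊆ G.edgeSet then 1 else 0 := by
  have hk : ∀ i : Fin K, 3 ≤ (i : ℕ) + 3 := fun i => by omega
  rw [Finset.sum_boole, Finset.filter_filter, ← Finset.prod_mul_distrib]
  have h1 : ∀ i : Fin K, ((2 * ((i : ℕ) + 3) : ℕ) : ℝ) ^ r i *
      ((numCyc ((i : ℕ) + 3) G).descFactorial (r i) : ℝ) =
      ((Finset.univ.filter fun f : Fin (r i) → (ZMod ((i : ℕ) + 3) → Fin n) =>
        (∀ t, f t ∈ Finset.univ.filter fun f : ZMod ((i : ℕ) + 3) → Fin n => IsCyc G f) ∧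
        Function.Injective fun t => cycEdges (f t)).card : ℝ) := by
    intro i
    rw [card_tuples _ cycEdges (2 * ((i : ℕ) + 3)) (card_fiber_isCyc (hk i) G) (r i)]
    rw [numCyc]
    push_cast
    rfl
  simp only [h1]
  rw [← Nat.cast_prod, ← Fintype.card_piFinset]
  congr 1
  refine Finset.card_bij' (fun F _ => fun q => F q.1 q.2) (fun F _ => fun i t => F ⟨i, t⟩) ?_ ?_ ?_ ?_
  · intro F hF
    rw [Fintype.mem_piFinset] at hF
    simp only [Finset.mem_filter, Finset.mem_univ, true_and] at hF ⊢
    refine ⟨⟨fun q => ((hF q.1).1 q.2).1, ?_⟩, ?_⟩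
    · rintro ⟨i, t⟩ ⟨i', t'⟩ h
      have h' : cycEdges (F i t) = cycEdges (F i' t') := h
      have hc := congrArg Finset.card h'
      rw [card_cycEdges (hk i) ((hF i).1 t).1, card_cycEdges (hk i') ((hF i').1 t').1] at hc
      have : i = i' := Fin.ext (by omega)
      subst this
      rw [(hF i).2 h']
    · intro e he
      obtain ⟨q, -, hq⟩ := Finset.mem_biUnion.1 he
      exact ((hF q.1).1 q.2).2 hq
  · intro F hF
    rw [Fintype.mem_piFinset]
    simp only [Finset.mem_filter, Finset.mem_univ, true_and] at hF ⊢
    intro i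
    refine ⟨fun t => ⟨hF.1.1 ⟨i, t⟩, fun e he => hF.2 ?_⟩, fun t t' h => ?_⟩
    · exact Finset.mem_biUnion.2 ⟨⟨i, t⟩, Finset.mem_univ _, he⟩
    · have := @hF.1.2 ⟨i, t⟩ ⟨i, t'⟩ h
      simpa using this
  · intro F _; rfl
  · intro F _; rfl

/-- The expected number `c ^ k / (2 * k)` of cycles of length `k = i + 3`. -/
noncomputable def lam (c : ℝ) (i : ℕ) : ℝ := c ^ (i + 3) / (2 * (i + 3))

lemma tendsto_moments {c : ℝ} (hc : 0 < c) :
    Tendsto (fun n : ℕ => gEx n (edgeP c n) fun G =>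
      ∏ i : Fin K, ((numCyc ((i : ℕ) + 3) G).descFactorial (r i) : ℝ)) atTop
      (𝓝 (∏ i : Fin K, lam c i ^ r i)) := by
  set A : ℝ := ∏ i : Fin K, ((2 * ((i : ℕ) + 3) : ℕ) : ℝ) ^ r i with hA
  have hA0 : A ≠ 0 := Finset.prod_ne_zero_iff.2 fun i _ => pow_ne_zero _ (by positivity)
  have h1 := tendsto_sum_goodFam (k := fun q : (Σ i : Fin K, Fin (r i)) => (q.1 : ℕ) + 3)
    (fun q => by omega) hc
  have h2 := h1.const_mul A⁻¹
  have h3 : A⁻¹ * c ^ ∑ q : (Σ i : Fin K, Fin (r i)), ((q.1 : ℕ) + 3)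
      = ∏ i : Fin K, lam c i ^ r i := by
    rw [Fintype.sum_sigma, ← Finset.prod_pow_eq_pow_sum, hA, ← Finset.prod_inv_distrib,
      ← Finset.prod_mul_distrib]
    refine Finset.prod_congr rfl fun i _ => ?_
    simp only
    rw [lam, div_pow, Finset.sum_const, Finset.card_univ, Fintype.card_fin, smul_eq_mul,
      mul_comm (r i), pow_mul]
    push_cast
    rw [div_eq_mul_inv, mul_comm]
  rw [h3] at h2
  refine h2.congr fun n => ?_
  have h4 : A * gEx n (edgeP c n) (fun G =>
      ∏ i : Fin K, ((numCyc ((i : ℕ) + 3) G).descFactorial (r i) : ℝ))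
      = ∑ F : ∀ q : (Σ i : Fin K, Fin (r i)), ZMod ((q.1 : ℕ) + 3) → Fin n with GoodFam F,
        edgeP c n ^ (famEdges F).card := by
    rw [← gEx_const_mul]
    simp only [hA, prod_descFactorial_eq r]
    rw [gEx_sum]
    refine Finset.sum_congr rfl fun F hF => ?_
    refine gEx_edges _ _ fun e he => ?_
    obtain ⟨q, -, hq⟩ := Finset.mem_biUnion.1 he
    exact not_isDiag_of_mem_cycEdges (by omega) ((Finset.mem_filter.1 hF).2.1 q) hq
  calc _ = A⁻¹ * (A * gEx n (edgeP c n) (fun G =>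
      ∏ i : Fin K, ((numCyc ((i : ℕ) + 3) G).descFactorial (r i) : ℝ))) := by
        rw [h4]; congr!
    _ = _ := by rw [← mul_assoc, inv_mul_cancel₀ hA0, one_mul]
end

/-! ### Poisson limit by sieving -/

/-- The Poisson probability mass function. -/
noncomputable def pois (l : ℝ) (j : ℕ) : ℝ := Real.exp (-l) * l ^ j / j.factorial

lemma abs_indicator_sub_alternating_le (m R : ℕ) :
    |(if m = 0 then (1 : ℝ) else 0) - ∑ i ∈ Finset.range R, (-1) ^ i * (m.choose i : ℝ)|
      ≤ m.choose R := by
  rcases R with _ | R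
  · simp only [Finset.range_zero, Finset.sum_empty, Nat.choose_zero_right]
    split_ifs <;> simp
  rcases m with _ | m
  · rw [Finset.sum_range_succ']
    simp
  · have h := congrArg (Int.cast : ℤ → ℝ)
      (Int.alternating_sum_range_choose_eq_choose (n := m) (m := R))
    push_cast at h
    rw [h]
    simp only [Nat.add_eq_zero_iff, one_ne_zero, and_false, if_false, zero_sub, abs_neg, abs_mul,
      abs_pow, abs_one, one_pow, one_mul, Nat.abs_cast]
    rw [Nat.choose_succ_succ]
    exact_mod_cast Nat.le_add_right _ _

/-- Bonferroni inequalities for the event `X = j`. -/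
lemma bonferroni (X j R : ℕ) :
    |(if X = j then (1 : ℝ) else 0) - ∑ i ∈ Finset.range R,
        ((-1) ^ i / (j.factorial * i.factorial)) * (X.descFactorial (j + i) : ℝ)|
      ≤ (1 / (j.factorial * R.factorial)) * (X.descFactorial (j + R) : ℝ) := by
  by_cases hX : X < j
  · have : ∀ i, X.descFactorial (j + i) = 0 := fun i =>
      Nat.descFactorial_eq_zero_iff_lt.2 (by omega)
    simp [this, hX.ne]
  · push Not at hX
    obtain ⟨m, rfl⟩ := Nat.exists_eq_add_of_le hX
    have hfac : ∀ i, ((j + m).descFactorial (j + i) : ℝ)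
        = j.factorial * ((j + m).choose j) * (i.factorial * m.choose i) := by
      intro i
      rw [← Nat.descFactorial_mul_descFactorial (Nat.le_add_right j i), Nat.add_sub_cancel_left,
        Nat.add_sub_cancel_left, Nat.descFactorial_eq_factorial_mul_choose,
        Nat.descFactorial_eq_factorial_mul_choose]
      push_cast
      ring
    have hj : (j.factorial : ℝ) ≠ 0 := by exact_mod_cast j.factorial_ne_zero
    have h1 : ∑ i ∈ Finset.range R,
        ((-1) ^ i / (j.factorial * i.factorial)) * ((j + m).descFactorial (j + i) : ℝ)
        = ((j + m).choose j) * ∑ i ∈ Finset.range R, (-1) ^ i * (m.choose i : ℝ) := by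
      rw [Finset.mul_sum]
      refine Finset.sum_congr rfl fun i _ => ?_
      have hi : (i.factorial : ℝ) ≠ 0 := by exact_mod_cast i.factorial_ne_zero
      rw [hfac]
      field_simp
    have h2 : (if j + m = j then (1 : ℝ) else 0)
        = ((j + m).choose j) * (if m = 0 then (1 : ℝ) else 0) := by
      by_cases hm : m = 0
      · subst hm; simp
      · simp [hm]
    have hR : (R.factorial : ℝ) ≠ 0 := by exact_mod_cast R.factorial_ne_zero
    rw [h1, h2, ← mul_sub, abs_mul, Nat.abs_cast, hfac]
    calc _ ≤ ((j + m).choose j : ℝ) * m.choose R :=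
          mul_le_mul_of_nonneg_left (abs_indicator_sub_alternating_le m R) (Nat.cast_nonneg _)
      _ = _ := by field_simp

/-- Weighted form of Brun's sieve: convergence of the factorial moments of `X`, weighted by `W`,
to those of a Poisson variable gives convergence of the weighted point probabilities. -/
lemma tendsto_sieve {p : ℕ → ℝ} (hp0 : ∀ n, 0 ≤ p n) (hp1 : ∀ n, p n ≤ 1)
    (W : ∀ n, SimpleGraph (Fin n) → ℝ) (hW : ∀ n G, 0 ≤ W n G)
    (X : ∀ n, SimpleGraph (Fin n) → ℕ) (w l : ℝ)
    (h : ∀ r, Tendsto (fun n => gEx n (p n) fun G => ((X n G).descFactorial r : ℝ) * W n G) atTop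
      (𝓝 (l ^ r * w))) (j : ℕ) :
    Tendsto (fun n => gEx n (p n) fun G => (if X n G = j then 1 else 0) * W n G) atTop
      (𝓝 (pois l j * w)) := by
  set b : ℕ → ℕ → ℝ := fun R n => ∑ i ∈ Finset.range R,
    ((-1) ^ i / (j.factorial * i.factorial)) *
      gEx n (p n) (fun G => ((X n G).descFactorial (j + i) : ℝ) * W n G) with hb
  set e : ℕ → ℕ → ℝ := fun R n => (1 / (j.factorial * R.factorial)) *
      gEx n (p n) (fun G => ((X n G).descFactorial (j + R) : ℝ) * W n G) with he
  have hdiff : ∀ R n, |gEx n (p n) (fun G => (if X n G = j then 1 else 0) * W n G) - b R n|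
      ≤ e R n := by
    intro R n
    simp only [hb, he, ← gEx_const_mul, ← gEx_sum]
    rw [gEx, gEx, ← Finset.sum_sub_distrib]
    refine (Finset.abs_sum_le_sum_abs _ _).trans (Finset.sum_le_sum fun G _ => ?_)
    rw [← mul_sub, abs_mul, abs_of_nonneg (gWeight_nonneg (hp0 n) (hp1 n) G)]
    refine mul_le_mul_of_nonneg_left ?_ (gWeight_nonneg (hp0 n) (hp1 n) G)
    simp only [← mul_assoc]
    rw [← Finset.sum_mul, ← sub_mul, abs_mul, abs_of_nonneg (hW n G)]
    exact mul_le_mul_of_nonneg_right (bonferroni _ _ _) (hW n G)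
  have hbl : ∀ R, Tendsto (b R) atTop (𝓝 (∑ i ∈ Finset.range R,
      ((-1) ^ i / (j.factorial * i.factorial)) * (l ^ (j + i) * w))) := fun R =>
    tendsto_finsetSum _ fun i _ => (h (j + i)).const_mul _
  have hel : ∀ R, Tendsto (e R) atTop (𝓝 ((1 / (j.factorial * R.factorial)) * (l ^ (j + R) * w))) :=
    fun R => (h (j + R)).const_mul _
  have hB : Tendsto (fun R => ∑ i ∈ Finset.range R,
      ((-1) ^ i / (j.factorial * i.factorial : ℝ)) * (l ^ (j + i) * w)) atTop
      (𝓝 (pois l j * w)) := by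
    have h1 : HasSum (fun i : ℕ => (-l) ^ i / i.factorial) (Real.exp (-l)) := by
      have := NormedSpace.expSeries_div_hasSum_exp (-l)
      rwa [← Real.exp_eq_exp_ℝ] at this
    have h2 := (h1.mul_left (l ^ j * w / j.factorial)).tendsto_sum_nat
    have e1 : l ^ j * w / j.factorial * Real.exp (-l) = pois l j * w := by
      rw [pois]; ring
    rw [e1] at h2
    refine h2.congr fun R => Finset.sum_congr rfl fun i _ => ?_
    rw [neg_pow, pow_add]
    have hi : (i.factorial : ℝ) ≠ 0 := by exact_mod_cast i.factorial_ne_zero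
    have hj : (j.factorial : ℝ) ≠ 0 := by exact_mod_cast j.factorial_ne_zero
    field_simp
  have hEr : Tendsto (fun R : ℕ => (1 / (j.factorial * R.factorial : ℝ)) * (l ^ (j + R) * w)) atTop
      (𝓝 0) := by
    have := (FloorSemiring.tendsto_pow_div_factorial_atTop l).const_mul (l ^ j * w / j.factorial)
    rw [mul_zero] at this
    refine this.congr fun R => ?_
    rw [pow_add]
    have hi : (R.factorial : ℝ) ≠ 0 := by exact_mod_cast R.factorial_ne_zero
    have hj : (j.factorial : ℝ) ≠ 0 := by exact_mod_cast j.factorial_ne_zero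
    field_simp
  rw [Metric.tendsto_atTop]
  intro ε hε
  obtain ⟨R, hR1, hR2⟩ := ((hB.eventually (Metric.ball_mem_nhds _ (half_pos hε))).and
    (hEr.eventually (gt_mem_nhds (half_pos hε)))).exists
  -- choose the truncation level first, and only then let `n` tend to infinity
  have hlim : Tendsto (fun n => dist (b R n) (pois l j * w) + e R n) atTop
      (𝓝 (dist (∑ i ∈ Finset.range R,
        ((-1) ^ i / (j.factorial * i.factorial : ℝ)) * (l ^ (j + i) * w)) (pois l j * w) +
        (1 / (j.factorial * R.factorial : ℝ)) * (l ^ (j + R) * w))) :=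
    ((hbl R).dist tendsto_const_nhds).add (hel R)
  have hlt := hlim.eventually (gt_mem_nhds (show _ < ε by
    linarith))
  obtain ⟨N, hN⟩ := eventually_atTop.1 hlt
  refine ⟨N, fun n hn => ?_⟩
  have h1 := hN n hn
  have h2 := hdiff R n
  rw [← Real.dist_eq] at h2
  have h3 := dist_triangle (gEx n (p n) (fun G => (if X n G = j then 1 else 0) * W n G)) (b R n)
    (pois l j * w)
  linarith

/-- Joint Poisson limit of the numbers of cycles of lengths `3, …, K + 2`. -/
lemma tendsto_joint {c : ℝ} (hc : 0 < c) {K : ℕ} (j : Fin K → ℕ) :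
    Tendsto (fun n : ℕ => gProb n (edgeP c n) fun G => ∀ i : Fin K, numCyc ((i : ℕ) + 3) G = j i)
      atTop (𝓝 (∏ i : Fin K, pois (lam c i) (j i))) := by
  have key : ∀ T : Finset (Fin K), ∀ r : Fin K → ℕ,
      Tendsto (fun n : ℕ => gEx n (edgeP c n) fun G => ∏ i : Fin K,
        (if i ∈ T then (if numCyc ((i : ℕ) + 3) G = j i then (1 : ℝ) else 0)
          else ((numCyc ((i : ℕ) + 3) G).descFactorial (r i) : ℝ))) atTop
        (𝓝 (∏ i : Fin K, if i ∈ T then pois (lam c i) (j i) else lam c i ^ r i)) := by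
    intro T
    induction T using Finset.induction_on with
    | empty => intro r; simpa using tendsto_moments r hc
    | insert a T ha ih =>
      intro r
      have hsp : ∀ f : Fin K → ℝ, ∏ i, f i = f a * ∏ i ∈ Finset.univ.erase a, f i := fun f =>
        (Finset.mul_prod_erase _ f (Finset.mem_univ a)).symm
      have := tendsto_sieve (p := edgeP c) (edgeP_nonneg hc) (edgeP_le_one c)
        (fun n G => ∏ i ∈ Finset.univ.erase a,
          (if i ∈ T then (if numCyc ((i : ℕ) + 3) G = j i then (1 : ℝ) else 0)
          else ((numCyc ((i : ℕ) + 3) G).descFactorial (r i) : ℝ))) ?_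
        (fun n G => numCyc ((a : ℕ) + 3) G)
        (∏ i ∈ Finset.univ.erase a, if i ∈ T then pois (lam c i) (j i) else lam c i ^ r i)
        (lam c a) ?_ (j a)
      · have e1 : ∀ i ∈ Finset.univ.erase a, (i ∈ insert a T ↔ i ∈ T) := by
          intro i hi
          simp [Finset.ne_of_mem_erase hi]
        convert this using 2
        · congr 1
          ext G
          rw [hsp, if_pos (Finset.mem_insert_self a T)]
          congr 1
          refine Finset.prod_congr rfl fun i hi => ?_
          simp only [e1 i hi]
        · rw [hsp, if_pos (Finset.mem_insert_self a T)]
          congr 1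
          refine Finset.prod_congr rfl fun i hi => ?_
          simp only [e1 i hi]
      · intro n G
        refine Finset.prod_nonneg fun i _ => ?_
        split_ifs <;> positivity
      · intro s
        have h := ih (Function.update r a s)
        have e1 : ∀ i ∈ Finset.univ.erase a, Function.update r a s i = r i := by
          intro i hi
          simp [Finset.ne_of_mem_erase hi]
        convert h using 2
        · congr 1
          ext G
          rw [hsp, if_neg ha, Function.update_self]
          congr 1
          refine Finset.prod_congr rfl fun i hi => ?_
          simp only [e1 i hi]
        · rw [hsp, if_neg ha, Function.update_self]
          congr 1
          refine Finset.prod_congr rfl fun i hi => ?_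
          simp only [e1 i hi]
  have h := key Finset.univ (fun _ => 0)
  simp only [Finset.mem_univ, if_true] at h
  refine h.congr fun n => ?_
  rw [gProb_eq_gEx]
  congr 1
  ext G
  rw [Finset.prod_boole]
  simp

/-! ### Definability of cycle counts -/

/-- The first-order formula saying that the assignment `x : Fin M × ZMod k → V` of its variables
consists of `M` pairwise distinct traversals of `k`-cycles. -/
noncomputable def traversalsFormula (k M : ℕ) [NeZero k] :
    Language.graph.Formula (Empty ⊕ (Fin M × ZMod k)) :=
  (Language.Formula.iInf fun t : Fin M =>
    (Language.Formula.iInf fun ab : {ab : ZMod k × ZMod k // ab.1 ≠ ab.2} =>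
      (Language.Term.equal (Language.var (Sum.inr (t, ab.1.1)))
        (Language.var (Sum.inr (t, ab.1.2)))).not) ⊓
    (Language.Formula.iInf fun a : ZMod k =>
      Language.adj.formula₂ (Language.var (Sum.inr (t, a))) (Language.var (Sum.inr (t, a + 1))))) ⊓
  (Language.Formula.iInf fun ts : {ts : Fin M × Fin M // ts.1 ≠ ts.2} =>
    Language.Formula.iSup fun a : ZMod k =>
      (Language.Term.equal (Language.var (Sum.inr (ts.1.1, a)))
        (Language.var (Sum.inr (ts.1.2, a)))).not)

lemma gSat_iExs_traversalsFormula (k M : ℕ) [NeZero k] {n : ℕ} (G : SimpleGraph (Fin n)) :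
    gSat G ((traversalsFormula k M).iExs (Fin M × ZMod k)) ↔
      M ≤ (Finset.univ.filter fun f : ZMod k → Fin n => IsCyc G f).card := by
  let := G.structure
  have h1 : gSat G ((traversalsFormula k M).iExs (Fin M × ZMod k)) ↔
      ∃ x : Fin M × ZMod k → Fin n, (∀ t, IsCyc G fun a => x (t, a)) ∧
        Function.Injective fun t a => x (t, a) := by
    unfold gSat Language.Sentence.Realize
    rw [Language.Formula.realize_iExs]
    refine exists_congr fun x => ?_
    simp only [traversalsFormula, Language.Formula.realize_inf, Language.Formula.realize_iInf,
      Language.Formula.realize_iSup, Language.Formula.realize_not, Language.Formula.realize_equal,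
      Language.Formula.realize_rel₂, Language.Term.realize_var, Sum.elim_inr, isCyc_iff]
    refine and_congr (forall_congr' fun t => and_congr ?_ ?_) ?_
    · constructor
      · intro h a b hab
        by_contra hne
        exact h ⟨(a, b), hne⟩ hab
      · intro h ab hab
        exact ab.2 (h hab)
    · exact Iff.rfl
    · constructor
      · intro h s t hst
        by_contra hne
        obtain ⟨a, ha⟩ := h ⟨(s, t), hne⟩
        exact ha (congrFun hst a)
      · intro h ts
        by_contra hcon
        push Not at hcon
        exact ts.2 (h (funext hcon))
  rw [h1]
  constructor
  · rintro ⟨x, hx, hinj⟩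
    have : (Finset.univ.image fun (t : Fin M) a => x (t, a)).card = M := by
      rw [Finset.card_image_of_injective _ hinj, Finset.card_univ, Fintype.card_fin]
    rw [← this]
    refine Finset.card_le_card fun f hf => ?_
    obtain ⟨t, -, rfl⟩ := Finset.mem_image.1 hf
    simpa using hx t
  · intro h
    obtain ⟨T, hT, hcard⟩ := Finset.exists_subset_card_eq h
    let e := (T.equivFinOfCardEq hcard).symm
    refine ⟨fun ta => (e ta.1 : ZMod k → Fin n) ta.2, fun t => ?_, fun s t hst => ?_⟩
    · exact (Finset.mem_filter.1 (hT (e t).2)).2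
    · exact e.injective (Subtype.ext hst)

/-- Each event `numCyc k G = m` is first-order definable: it says that `G` has exactly `2 * k * m`
traversals of `k`-cycles. -/
lemma exists_sentence_numCyc_eq (k : ℕ) [NeZero k] (hk : 3 ≤ k) (m : ℕ) :
    ∃ φ : Language.graph.Sentence, ∀ (n : ℕ) (G : SimpleGraph (Fin n)),
      gSat G φ ↔ numCyc k G = m := by
  refine ⟨(traversalsFormula k (2 * k * m)).iExs (Fin (2 * k * m) × ZMod k) ⊓
    ((traversalsFormula k (2 * k * m + 1)).iExs (Fin (2 * k * m + 1) × ZMod k)).not, ?_⟩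
  intro n G
  have h1 := gSat_iExs_traversalsFormula k (2 * k * m) G
  have h2 := gSat_iExs_traversalsFormula k (2 * k * m + 1) G
  rw [card_isCyc hk] at h1 h2
  have h3 : ∀ φ ψ : Language.graph.Sentence, gSat G (φ ⊓ ψ.not) ↔ gSat G φ ∧ ¬ gSat G ψ := by
    intro φ ψ
    let := G.structure
    unfold gSat Language.Sentence.Realize
    rw [Language.Formula.realize_inf, Language.Formula.realize_not]
  rw [h3, h1, h2, not_le, Nat.lt_succ_iff, ← le_antisymm_iff, eq_comm]
  exact Nat.mul_right_inj (by omega)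

lemma exists_sentence_numCyc_mem {K : ℕ} (S : Finset (Fin K → ℕ)) :
    ∃ φ : Language.graph.Sentence, ∀ (n : ℕ) (G : SimpleGraph (Fin n)),
      gSat G φ ↔ (fun i : Fin K => numCyc ((i : ℕ) + 3) G) ∈ S := by
  choose φ hφ using fun (i : Fin K) (m : ℕ) =>
    exists_sentence_numCyc_eq ((i : ℕ) + 3) (Nat.le_add_left 3 _) m
  refine ⟨Language.Formula.iSup fun j : S => Language.Formula.iInf fun i : Fin K =>
    φ i ((j : Fin K → ℕ) i), fun n G => ?_⟩
  have h : gSat G (Language.Formula.iSup fun j : S => Language.Formula.iInf fun i : Fin K =>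
      φ i ((j : Fin K → ℕ) i)) ↔ ∃ j : S, ∀ i, gSat G (φ i ((j : Fin K → ℕ) i)) := by
    let := G.structure
    unfold gSat Language.Sentence.Realize
    simp only [Language.Formula.realize_iSup, Language.Formula.realize_iInf]
  rw [h]
  simp only [hφ]
  constructor
  · rintro ⟨j, hj⟩
    rw [show (fun i : Fin K => numCyc ((i : ℕ) + 3) G) = j from funext hj]
    exact j.2
  · intro hS
    exact ⟨⟨_, hS⟩, fun i => rfl⟩

/-- Every finite sum of point masses of the limiting joint cycle distribution is the limiting
probability of a first-order sentence. -/
lemma sum_prod_pois_mem_limFOProbs {c : ℝ} (hc : 0 < c) {K : ℕ} (S : Finset (Fin K → ℕ)) :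
    ∑ j ∈ S, ∏ i : Fin K, pois (lam c i) (j i) ∈ limFOProbs c := by
  obtain ⟨φ, hφ⟩ := exists_sentence_numCyc_mem S
  refine ⟨φ, (tendsto_finsetSum S fun j _ => tendsto_joint hc j).congr fun n => ?_⟩
  change _ = gProb n (edgeP c n) _
  simp only [gProb_eq_gEx]
  rw [← gEx_sum]
  congr 1
  ext G
  rw [hφ]
  by_cases h : (fun i : Fin K => numCyc ((i : ℕ) + 3) G) ∈ S
  · rw [if_pos h, Finset.sum_eq_single_of_mem _ h]
    · simp
    · intro j _ hj
      rw [if_neg]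
      exact fun hcon => hj (funext fun i => (hcon i).symm)
  · rw [if_neg h]
    refine Finset.sum_eq_zero fun j hj => ?_
    rw [if_neg]
    intro hcon
    rw [show (fun i : Fin K => numCyc ((i : ℕ) + 3) G) = j from funext hcon] at h
    exact h hj

/-! ### Subset sums -/

/-- Greedy (Kakeya-type) lemma: if every mass is at most `ε` plus the total of the strictly smaller
masses, then the subset sums leave no gap longer than `ε`. -/
lemma exists_subset_sum_near {α : Type*} (p : α → ℝ) {ε : ℝ} (F : Finset α)
    (hF : ∀ a ∈ F, p a ≤ ∑ b ∈ F.filter (fun b => p b < p a), p b + ε) (hp : ∀ a ∈ F, 0 ≤ p a)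
    (x : ℝ) (hx0 : 0 ≤ x) (hx1 : x ≤ ∑ a ∈ F, p a + ε) :
    ∃ S : Finset α, x - ε ≤ ∑ a ∈ S, p a ∧ ∑ a ∈ S, p a ≤ x ∧ S ⊆ F := by
  induction hn : F.card generalizing F x with
  | zero =>
    rw [Finset.card_eq_zero] at hn
    subst hn
    refine ⟨∅, ?_, ?_, subset_rfl⟩ <;> simp at * <;> linarith
  | succ N ih =>
    obtain ⟨a, ha, hmax⟩ := Finset.exists_max_image F p (Finset.card_pos.1 (by omega))
    have hsum : ∑ b ∈ F, p b = p a + ∑ b ∈ F.erase a, p b := (Finset.add_sum_erase F p ha).symm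
    have hcond : ∀ b ∈ F.erase a,
        p b ≤ ∑ d ∈ (F.erase a).filter (fun d => p d < p b), p d + ε := by
      intro b hb
      have hbF := Finset.mem_of_mem_erase hb
      have e : (F.erase a).filter (fun d => p d < p b) = F.filter (fun d => p d < p b) := by
        ext d
        simp only [Finset.mem_filter, Finset.mem_erase]
        constructor
        · rintro ⟨⟨-, h1⟩, h2⟩
          exact ⟨h1, h2⟩
        · rintro ⟨h1, h2⟩
          refine ⟨⟨?_, h1⟩, h2⟩
          rintro rfl
          exact absurd (hmax b hbF) (not_le.2 h2)
      rw [e]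
      exact hF b hbF
    have hpos : ∀ b ∈ F.erase a, 0 ≤ p b := fun b hb => hp b (Finset.mem_of_mem_erase hb)
    have hcard : (F.erase a).card = N := by rw [Finset.card_erase_of_mem ha, hn]; rfl
    by_cases hxa : p a ≤ x
    · obtain ⟨S, h1, h2, h3⟩ := ih (F.erase a) hcond hpos (x - p a) (by linarith) (by linarith) hcard
      have haS : a ∉ S := fun h => Finset.notMem_erase a F (h3 h)
      refine ⟨insert a S, ?_, ?_, ?_⟩
      · rw [Finset.sum_insert haS]; linarith
      · rw [Finset.sum_insert haS]; linarith
      · exact Finset.insert_subset ha (h3.trans (Finset.erase_subset _ _))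
    · push Not at hxa
      have h1 : ∑ b ∈ F.filter (fun b => p b < p a), p b ≤ ∑ b ∈ F.erase a, p b := by
        refine Finset.sum_le_sum_of_subset_of_nonneg (fun b hb => ?_) fun b hb _ => hpos b hb
        rw [Finset.mem_filter] at hb
        refine Finset.mem_erase.2 ⟨?_, hb.1⟩
        rintro rfl
        exact lt_irrefl _ hb.2
      have h2 := hF a ha
      obtain ⟨S, h3, h4, h5⟩ := ih (F.erase a) hcond hpos x hx0 (by linarith) hcard
      exact ⟨S, h3, h4, h5.trans (Finset.erase_subset _ _)⟩

/-! ### Poisson point masses -/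

lemma pois_nonneg {l : ℝ} (hl : 0 ≤ l) (j : ℕ) : 0 ≤ pois l j := by
  unfold pois; positivity

lemma pois_pos {l : ℝ} (hl : 0 < l) (j : ℕ) : 0 < pois l j := by
  unfold pois; positivity

lemma pois_zero (l : ℝ) : pois l 0 = Real.exp (-l) := by simp [pois]

lemma pois_succ (l : ℝ) (j : ℕ) : pois l (j + 1) = pois l j * (l / (j + 1)) := by
  have : (j.factorial : ℝ) ≠ 0 := by exact_mod_cast j.factorial_ne_zero
  have h : (j : ℝ) + 1 ≠ 0 := by positivity
  simp only [pois, Nat.factorial_succ]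
  push_cast
  field_simp
  ring

lemma hasSum_pois (l : ℝ) : HasSum (pois l) 1 := by
  have h1 : HasSum (fun i : ℕ => l ^ i / i.factorial) (Real.exp l) := by
    have := NormedSpace.expSeries_div_hasSum_exp l
    rwa [← Real.exp_eq_exp_ℝ] at this
  have h2 := h1.mul_left (Real.exp (-l))
  rw [← Real.exp_add, neg_add_cancel, Real.exp_zero] at h2
  refine h2.congr_fun fun j => ?_
  rw [pois, mul_div_assoc]

lemma sum_pois_le_one {l : ℝ} (hl : 0 ≤ l) (s : Finset ℕ) : ∑ j ∈ s, pois l j ≤ 1 :=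
  sum_le_hasSum s (fun j _ => pois_nonneg hl j) (hasSum_pois l)

lemma pois_le_one {l : ℝ} (hl : 0 ≤ l) (j : ℕ) : pois l j ≤ 1 := by
  simpa using sum_pois_le_one hl {j}

/-- A positive number of occurrences never has Poisson probability above one half: its mass is at
most the sum of the two neighbouring masses. -/
lemma pois_succ_le_half {l : ℝ} (hl : 0 ≤ l) (j : ℕ) : pois l (j + 1) ≤ 1 / 2 := by
  have h := sum_pois_le_one hl (Finset.Ico j (j + 3))
  rw [Finset.sum_Ico_eq_sum_range, show j + 3 - j = 3 by omega] at h
  simp only [Finset.sum_range_succ, Finset.sum_range_zero, add_zero, zero_add] at h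
  have h2 : pois l (j + 2) = pois l j * (l / (j + 1)) * (l / (j + 2)) := by
    rw [show j + 2 = (j + 1) + 1 from rfl, pois_succ, pois_succ]
    push_cast
    ring_nf
  have h3 : pois l (j + 1) ≤ pois l j + pois l (j + 2) := by
    rw [h2, pois_succ]
    have : l / (j + 1 : ℝ) ≤ 1 + l / (j + 1) * (l / (j + 2)) := by
      have hj : (0 : ℝ) ≤ j := Nat.cast_nonneg j
      have e : 1 + l / (j + 1 : ℝ) * (l / (j + 2)) - l / (j + 1)
          = ((j + 1) * (j + 2) + l ^ 2 - l * (j + 2)) / ((j + 1) * (j + 2)) := by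
        field_simp
      have : 0 ≤ ((j + 1) * (j + 2) + l ^ 2 - l * (j + 2)) / ((j + 1 : ℝ) * (j + 2)) := by
        refine div_nonneg ?_ (by positivity)
        nlinarith [sq_nonneg (l - (j + 2) / 2)]
      linarith
    nlinarith [pois_nonneg hl j, mul_le_mul_of_nonneg_left this (pois_nonneg hl j)]
  linarith

lemma pois_le_exp_neg {l a : ℝ} (ha : a ≤ 1 / 6) (ha0 : 0 ≤ a) (hl : a ≤ l) (j : ℕ) :
    pois l j ≤ Real.exp (-a) := by
  rcases j with _ | j
  · rw [pois_zero]
    exact Real.exp_le_exp.2 (by linarith)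
  · refine (pois_succ_le_half (ha0.trans hl) j).trans ?_
    have := Real.add_one_le_exp (-a)
    linarith

lemma pois_le_pois_zero {l : ℝ} (hl0 : 0 < l) (hl1 : l < 1) (j : ℕ) : pois l j ≤ pois l 0 := by
  induction j with
  | zero => exact le_rfl
  | succ j ih =>
    refine le_trans ?_ ih
    rw [pois_succ]
    refine mul_le_of_le_one_right (pois_nonneg hl0.le j) ?_
    rw [div_le_one (by positivity)]
    have : (0 : ℝ) ≤ j := Nat.cast_nonneg j
    linarith

lemma pois_lt_pois_zero {l : ℝ} (hl0 : 0 < l) (hl1 : l < 1) {j : ℕ} (hj : j ≠ 0) :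
    pois l j < pois l 0 := by
  obtain ⟨j, rfl⟩ := Nat.exists_eq_succ_of_ne_zero hj
  refine lt_of_lt_of_le ?_ (pois_le_pois_zero hl0 hl1 j)
  rw [Nat.succ_eq_add_one, pois_succ]
  refine mul_lt_of_lt_one_right (pois_pos hl0 j) ?_
  rw [div_lt_one (by positivity)]
  have : (0 : ℝ) ≤ j := Nat.cast_nonneg j
  linarith

lemma pois_le_div {l : ℝ} (hl0 : 0 ≤ l) {m : ℕ} (hm : m ≠ 0) : pois l m ≤ l / m := by
  obtain ⟨j, rfl⟩ := Nat.exists_eq_succ_of_ne_zero hm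
  rw [Nat.succ_eq_add_one, pois_succ]
  push_cast
  exact mul_le_of_le_one_left (by positivity) (pois_le_one hl0 j)

/-! ### Atoms of the limiting joint distribution -/

/-- The probability that independent Poisson variables with means `lam c 0, …, lam c (K - 1)` take
the values `j 0, …, j (K - 1)`. -/
noncomputable def atomP (c : ℝ) {K : ℕ} (j : Fin K → ℕ) : ℝ := ∏ i : Fin K, pois (lam c i) (j i)

/-- The value vectors with all entries at most `M`. -/
def box (K M : ℕ) : Finset (Fin K → ℕ) := Fintype.piFinset fun _ => Finset.range (M + 1)

lemma mem_box {K M : ℕ} {j : Fin K → ℕ} : j ∈ box K M ↔ ∀ i, j i ≤ M := by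
  simp [box, Fintype.mem_piFinset]

lemma lam_pos {c : ℝ} (hc : 0 < c) (i : ℕ) : 0 < lam c i := by
  unfold lam; positivity

lemma atomP_nonneg {c : ℝ} (hc : 0 < c) {K : ℕ} (j : Fin K → ℕ) : 0 ≤ atomP c j :=
  Finset.prod_nonneg fun i _ => pois_nonneg (lam_pos hc i).le _

lemma tendsto_sum_box (c : ℝ) (K : ℕ) :
    Tendsto (fun M => ∑ j ∈ box K M, atomP c j) atTop (𝓝 1) := by
  have h : ∀ M, ∑ j ∈ box K M, atomP c j
      = ∏ i : Fin K, ∑ t ∈ Finset.range (M + 1), pois (lam c i) t := fun M => by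
    rw [Finset.prod_univ_sum]; rfl
  simp only [h]
  have := tendsto_finsetProd (Finset.univ : Finset (Fin K)) fun i _ =>
    ((hasSum_pois (lam c i)).tendsto_sum_nat.comp (tendsto_add_atTop_nat 1))
  simpa using this

/-- For `c ≥ 1` the cycle counts have divergent total mean, so all atoms are small. -/
lemma exists_atomP_le_of_one_le {c : ℝ} (hc : 1 ≤ c) {ε : ℝ} (hε : 0 < ε) :
    ∃ K, ∀ j : Fin K → ℕ, atomP c j ≤ ε := by
  have hb : ∀ (K : ℕ) (j : Fin K → ℕ),
      atomP c j ≤ Real.exp (-∑ i ∈ Finset.range K, 1 / (2 * ((i : ℝ) + 3))) := by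
    intro K j
    rw [← Finset.sum_neg_distrib, Real.exp_sum, ← Fin.prod_univ_eq_prod_range
      (fun i : ℕ => Real.exp (-(1 / (2 * ((i : ℝ) + 3)))))]
    refine Finset.prod_le_prod (fun i _ => pois_nonneg (lam_pos (by linarith) i).le _) fun i _ => ?_
    have hi : (0 : ℝ) ≤ (i : ℕ) := Nat.cast_nonneg _
    refine pois_le_exp_neg ?_ (by positivity) ?_ _
    · rw [div_le_div_iff₀ (by positivity) (by norm_num)]; linarith
    · unfold lam
      gcongr
      exact one_le_pow₀ hc
  have hdiv : Tendsto (fun K => ∑ i ∈ Finset.range K, 1 / (2 * ((i : ℝ) + 3))) atTop atTop := by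
    have h1 := (not_summable_iff_tendsto_nat_atTop_of_nonneg (f := fun i : ℕ => 1 / (i : ℝ))
      fun i => by positivity).1 Real.not_summable_one_div_natCast
    have h2 : ¬ Summable fun i : ℕ => 1 / (2 * ((i : ℝ) + 3)) := by
      intro h
      have h3 := h.mul_left 2
      refine Real.not_summable_one_div_natCast ((summable_nat_add_iff 3).1 (h3.congr fun i => ?_))
      push_cast
      have : (i : ℝ) + 3 ≠ 0 := by positivity
      field_simp
    exact (not_summable_iff_tendsto_nat_atTop_of_nonneg fun i => by positivity).1 h2
  have := (Real.tendsto_exp_atBot.comp (tendsto_neg_atTop_atBot.comp hdiv))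
  obtain ⟨K, hK⟩ := (this.eventually (gt_mem_nhds hε)).exists
  exact ⟨K, fun j => (hb K j).trans hK.le⟩

lemma lam_succ (c : ℝ) (i : ℕ) : lam c (i + 1) = lam c i * (c * ((i + 3) / (i + 4))) := by
  unfold lam
  have h3 : (i : ℝ) + 3 ≠ 0 := by positivity
  have h4 : (i : ℝ) + 4 ≠ 0 := by positivity
  push_cast
  rw [show (i : ℝ) + 1 + 3 = i + 4 by ring]
  field_simp
  ring

lemma lam_succ_lt {c : ℝ} (hc0 : 0 < c) (hc1 : c < 1) (i : ℕ) : lam c (i + 1) < lam c i := by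
  rw [lam_succ]
  refine mul_lt_of_lt_one_right (lam_pos hc0 i) ?_
  have : ((i : ℝ) + 3) / (i + 4) ≤ 1 := by
    rw [div_le_one (by positivity)]; linarith
  nlinarith

lemma lam_strictAnti {c : ℝ} (hc0 : 0 < c) (hc1 : c < 1) : StrictAnti (lam c) :=
  strictAnti_nat_of_succ_lt (lam_succ_lt hc0 hc1)

lemma lam_le {c : ℝ} (hc0 : 0 < c) (hc1 : c < 1) (i : ℕ) : lam c i ≤ 1 / (2 * (i + 3)) := by
  unfold lam
  gcongr
  exact pow_le_one₀ hc0.le hc1.le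

lemma lam_lt_one {c : ℝ} (hc0 : 0 < c) (hc1 : c < 1) (i : ℕ) : lam c i < 1 := by
  refine (lam_le hc0 hc1 i).trans_lt ?_
  rw [div_lt_one (by positivity)]
  have : (0 : ℝ) ≤ i := Nat.cast_nonneg i
  linarith

/-- Trading one cycle of the `i`-th length for one of the `i'`-th length, of which there were none.
-/
lemma atomP_trade {c : ℝ} {K : ℕ} (j : Fin K → ℕ) {i i' : Fin K} (hii : i ≠ i') (hi : j i ≠ 0)
    (hi' : j i' = 0) :
    atomP c (Function.update (Function.update j i (j i - 1)) i' 1) * lam c i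
      = atomP c j * (j i * lam c i') := by
  obtain ⟨m, hm⟩ := Nat.exists_eq_succ_of_ne_zero hi
  have hsp : ∀ f : Fin K → ℝ,
      ∏ t, f t = f i * (f i' * ∏ t ∈ (Finset.univ.erase i).erase i', f t) := fun f => by
    rw [Finset.mul_prod_erase _ f (Finset.mem_erase.2 ⟨hii.symm, Finset.mem_univ i'⟩),
      Finset.mul_prod_erase _ f (Finset.mem_univ i)]
  have hrest : ∏ t ∈ (Finset.univ.erase i).erase i',
      pois (lam c t) (Function.update (Function.update j i (j i - 1)) i' 1 t)
      = ∏ t ∈ (Finset.univ.erase i).erase i', pois (lam c t) (j t) := by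
    refine Finset.prod_congr rfl fun t ht => ?_
    simp only [Finset.mem_erase] at ht
    rw [Function.update_of_ne ht.1, Function.update_of_ne ht.2.1]
  rw [atomP, atomP, hsp, hsp fun t => pois (lam c t) (j t), hrest, Function.update_self,
    Function.update_of_ne hii, Function.update_self, hi', hm, Nat.succ_eq_add_one,
    Nat.add_sub_cancel, pois_succ, show (1 : ℕ) = 0 + 1 from rfl, pois_succ]
  have : (m : ℝ) + 1 ≠ 0 := by positivity
  push_cast
  field_simp
  ring

lemma hasSum_lam {c : ℝ} (hc0 : 0 < c) (hc1 : c < 1) :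
    HasSum (lam c) (-Real.log (1 - c) / 2 - c / 2 - c ^ 2 / 4) := by
  have h := Real.hasSum_pow_div_log_of_abs_lt_one (x := c) (by rw [abs_of_pos hc0]; exact hc1)
  have h2 := ((hasSum_nat_add_iff' 2).2 h).div_const 2
  have e1 : lam c = fun i => c ^ (i + 2 + 1) / (((i + 2 : ℕ) : ℝ) + 1) / 2 := by
    ext i
    unfold lam
    push_cast
    have : (i : ℝ) + 3 ≠ 0 := by positivity
    rw [show (i : ℝ) + 2 + 1 = i + 3 by ring, show i + 2 + 1 = i + 3 from rfl]
    field_simp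
  have e2 : -Real.log (1 - c) / 2 - c / 2 - c ^ 2 / 4
      = (-Real.log (1 - c) - ∑ i ∈ Finset.range 2, c ^ (i + 1) / ((i : ℝ) + 1)) / 2 := by
    simp [Finset.sum_range_succ]
    ring
  rw [e1, e2]
  exact h2

/-- At the threshold the total mean number of cycles is `log 2`, that is, the limiting probability
of being acyclic is one half. -/
lemma hasSum_lam_threshold {c₀ : ℝ} (h0 : 0 < c₀) (h1 : c₀ < 1)
    (heq : Real.exp (c₀ / 2 + c₀ ^ 2 / 4) * Real.sqrt (1 - c₀) = 1 / 2) :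
    HasSum (lam c₀) (Real.log 2) := by
  have h := congrArg Real.log heq
  rw [Real.log_mul (Real.exp_pos _).ne' (Real.sqrt_pos.2 (by linarith)).ne', Real.log_exp,
    Real.log_sqrt (by linarith), one_div, Real.log_inv] at h
  have := hasSum_lam h0 h1
  convert this using 1
  linarith

lemma threshold_ge {c₀ : ℝ} (h0 : 0 < c₀) (h1 : c₀ < 1)
    (heq : Real.exp (c₀ / 2 + c₀ ^ 2 / 4) * Real.sqrt (1 - c₀) = 1 / 2) : 0.82 ≤ c₀ := by
  have hsq : Real.exp (c₀ + c₀ ^ 2 / 2) * (1 - c₀) = 1 / 4 := by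
    have h2 : Real.exp (c₀ + c₀ ^ 2 / 2) = Real.exp (c₀ / 2 + c₀ ^ 2 / 4) ^ 2 := by
      rw [← Real.exp_nat_mul]; congr 1; push_cast; ring
    rw [h2, ← Real.sq_sqrt (show (0 : ℝ) ≤ 1 - c₀ by linarith), ← mul_pow]
    rw [heq]
    norm_num
  have he := Real.add_one_le_exp (c₀ + c₀ ^ 2 / 2)
  by_contra hcon
  push Not at hcon
  by_cases h : c₀ ≤ 0.75
  · nlinarith [sq_nonneg c₀]
  · push Not at h
    norm_num at h hcon
    have hu : 2 ≤ Real.exp (c₀ + c₀ ^ 2 / 2) := by nlinarith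
    nlinarith

/-! ### Each atom is dominated by the smaller ones -/

/-- Two consecutive means add up to at least the preceding one, since
`0.82 * (3 / 4) * (1 + 0.82 * (4 / 5)) > 1`. -/
lemma lam_add_lam_succ_ge {c : ℝ} (hc0 : 0.82 ≤ c) {i : ℕ} {x : ℝ} {m : ℝ} (hm : 0 < m)
    (hx : x ≤ m * lam c i) (hx0 : 0 < x) :
    x ≤ m * lam c (i + 1) + m * lam c (i + 2) := by
  have hi : (0 : ℝ) ≤ i := Nat.cast_nonneg i
  have hl := lam_pos (show (0 : ℝ) < c by norm_num at hc0; linarith) i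
  have h1 : lam c i * 0.615 ≤ lam c (i + 1) := by
    rw [lam_succ]
    refine mul_le_mul_of_nonneg_left ?_ hl.le
    have : (0.75 : ℝ) ≤ (i + 3) / (i + 4) := by
      rw [le_div_iff₀ (by positivity)]; linarith
    nlinarith
  have h2 : lam c (i + 1) * 0.656 ≤ lam c (i + 2) := by
    rw [show i + 2 = (i + 1) + 1 from rfl, lam_succ c (i + 1)]
    refine mul_le_mul_of_nonneg_left ?_
      (lam_pos (show (0 : ℝ) < c by norm_num at hc0; linarith) _).le
    have : (0.8 : ℝ) ≤ (((i + 1 : ℕ) : ℝ) + 3) / (((i + 1 : ℕ) : ℝ) + 4) := by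
      push_cast
      rw [le_div_iff₀ (by positivity)]; linarith
    nlinarith
  have h3 : lam c i ≤ lam c (i + 1) + lam c (i + 2) := by linarith
  nlinarith

/-- For `c < 1` not too small, an atom with at least one cycle is either small or dominated by two
strictly smaller atoms: in terms of the largest occurring cycle length, trade one longest cycle for
a longer one, choosing the two shortest lengths which make the atom smaller. -/
lemma atomP_le_of_ne_zero {c : ℝ} (hc0 : 0.82 ≤ c) (hc1 : c < 1) {K M : ℕ} (hM : 1 ≤ M) {ε : ℝ}
    (hε : 0 < ε) (hK : 2 ≤ K) (hKε : lam c (K - 2) ≤ ε) (j : Fin K → ℕ) (hj : j ∈ box K M)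
    (hj0 : j ≠ 0) :
    atomP c j ≤ ∑ b ∈ (box K M).filter (fun b => atomP c b < atomP c j), atomP c b + ε := by
  have hcpos : 0 < c := by norm_num at hc0; linarith
  have hnn : 0 ≤ ∑ b ∈ (box K M).filter (fun b => atomP c b < atomP c j), atomP c b :=
    Finset.sum_nonneg fun b _ => atomP_nonneg hcpos b
  obtain ⟨i, hi, hlast⟩ : ∃ i, j i ≠ 0 ∧ ∀ t, i < t → j t = 0 := by
    have hne : (Finset.univ.filter fun t => j t ≠ 0).Nonempty := by
      by_contra hcon
      rw [Finset.not_nonempty_iff_eq_empty, Finset.filter_eq_empty_iff] at hcon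
      exact hj0 (funext fun t => not_not.1 (hcon (Finset.mem_univ t)))
    obtain ⟨i, hi, hmax⟩ := Finset.exists_max_image _ id hne
    refine ⟨i, (Finset.mem_filter.1 hi).2, fun t ht => ?_⟩
    by_contra hcon
    exact absurd (hmax t (Finset.mem_filter.2 ⟨Finset.mem_univ t, hcon⟩)) (not_le.2 ht)
  have hm : (1 : ℝ) ≤ j i := by exact_mod_cast Nat.one_le_iff_ne_zero.2 hi
  have hli := lam_pos hcpos i
  have hPpos : 0 < atomP c j := Finset.prod_pos fun t _ => pois_pos (lam_pos hcpos t) _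
  by_cases hbig : lam c i ≤ j i * lam c (K - 2)
  · -- the factor of the longest cycle length alone is small
    have h1 : atomP c j ≤ pois (lam c i) (j i) := by
      rw [atomP, ← Finset.mul_prod_erase _ _ (Finset.mem_univ i)]
      exact mul_le_of_le_one_right (pois_nonneg hli.le _) (Finset.prod_le_one
        (fun t _ => pois_nonneg (lam_pos hcpos t).le _)
        fun t _ => pois_le_one (lam_pos hcpos t).le _)
    have h2 := pois_le_div hli.le hi
    have h3 : lam c i / j i ≤ lam c (K - 2) := by
      rw [div_le_iff₀ (by linarith)]; linarith
    linarith
  · push Not at hbig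
    have hiK : (i : ℕ) < K - 2 := by
      by_contra hcon
      push Not at hcon
      have h1 := (lam_strictAnti hcpos hc1).antitone hcon
      nlinarith [lam_pos hcpos (K - 2)]
    have hex : ∃ t, (i : ℕ) < t ∧ j i * lam c t < lam c i := ⟨K - 2, hiK, hbig⟩
    obtain ⟨s, hs⟩ : ∃ s, Nat.find hex = s + 1 := Nat.exists_eq_succ_of_ne_zero fun h => by
      have := (Nat.find_spec hex).1
      omega
    have hspec := Nat.find_spec hex
    have hle := Nat.find_min' hex ⟨hiK, hbig⟩
    rw [hs] at hspec hle
    have hprev : lam c i ≤ j i * lam c s := by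
      rcases Nat.lt_or_ge i s with h | h
      · have := Nat.find_min hex (m := s) (by omega)
        push Not at this
        exact this h
      · have : s = i := by omega
        rw [this]
        nlinarith
    have hkey := lam_add_lam_succ_ge hc0 (by linarith : (0 : ℝ) < j i) hprev hli
    set i₁ : Fin K := ⟨s + 1, by omega⟩ with hi₁
    set i₂ : Fin K := ⟨s + 2, by omega⟩ with hi₂
    have hlt₁ : i < i₁ := by rw [Fin.lt_def]; exact hspec.1
    have hlt₂ : i < i₂ := by
      rw [Fin.lt_def]
      exact hspec.1.trans (Nat.lt_succ_self _)
    have hsmall : (j i : ℝ) * lam c i₂ < lam c i := by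
      have h1 : lam c i₂ < lam c i₁ := lam_succ_lt hcpos hc1 (s + 1)
      have h2 : (j i : ℝ) * lam c i₁ < lam c i := hspec.2
      nlinarith
    set b : Fin K → Fin K → ℕ := fun i' =>
      Function.update (Function.update j i (j i - 1)) i' 1 with hb
    have hval : ∀ i', i < i' → atomP c (b i') * lam c i = atomP c j * (j i * lam c i') :=
      fun i' h => atomP_trade j h.ne hi (hlast i' h)
    have hmem : ∀ i', i < i' → (j i : ℝ) * lam c i' < lam c i →
        b i' ∈ (box K M).filter (fun b => atomP c b < atomP c j) := by
      intro i' h hlt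
      refine Finset.mem_filter.2 ⟨mem_box.2 fun t => ?_, ?_⟩
      · have hjt := mem_box.1 hj
        simp only [hb, Function.update_apply]
        split_ifs
        · exact hM
        · exact (Nat.sub_le _ _).trans (hjt i)
        · exact hjt t
      · have h1 := hval i' h
        have h2 : atomP c (b i') * lam c i < atomP c j * lam c i := by
          rw [h1]; exact mul_lt_mul_of_pos_left hlt hPpos
        exact lt_of_mul_lt_mul_right h2 hli.le
    have hne : b i₁ ≠ b i₂ := by
      intro h
      have h1 : b i₁ i₁ = b i₂ i₁ := by rw [h]
      have h12 : i₁ ≠ i₂ := by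
        intro h
        have := congrArg Fin.val h
        simp [hi₁, hi₂] at this
      simp only [hb, Function.update_self, Function.update_of_ne h12,
        Function.update_of_ne hlt₁.ne', hlast i₁ hlt₁] at h1
      exact one_ne_zero h1
    have hsum : atomP c (b i₁) + atomP c (b i₂)
        ≤ ∑ b ∈ (box K M).filter (fun b => atomP c b < atomP c j), atomP c b := by
      rw [← Finset.sum_pair hne]
      refine Finset.sum_le_sum_of_subset_of_nonneg ?_ fun a _ _ => atomP_nonneg hcpos a
      intro a ha
      rcases Finset.mem_insert.1 ha with rfl | ha
      · exact hmem i₁ hlt₁ hspec.2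
      · rw [Finset.mem_singleton.1 ha]
        exact hmem i₂ hlt₂ hsmall
    have hfin : atomP c j * lam c i ≤ (atomP c (b i₁) + atomP c (b i₂)) * lam c i := by
      rw [add_mul, hval i₁ hlt₁, hval i₂ hlt₂, ← mul_add]
      exact mul_le_mul_of_nonneg_left hkey hPpos.le
    have := le_of_mul_le_mul_right hfin hli
    linarith

/-- The all-zero atom (no short cycles) is at most the total of the other atoms, up to errors. -/
lemma atomP_zero_le {c : ℝ} (hc0 : 0 < c) (hc1 : c < 1) {K M : ℕ} {ε : ℝ}
    (h0 : 2 * atomP c (0 : Fin K → ℕ) ≤ 1 + ε / 2)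
    (hbox : 1 - ε / 2 ≤ ∑ j ∈ box K M, atomP c j) :
    atomP c (0 : Fin K → ℕ) ≤
      ∑ b ∈ (box K M).filter (fun b => atomP c b < atomP c (0 : Fin K → ℕ)), atomP c b + ε := by
  have h1 : (box K M).filter (fun b => atomP c b < atomP c (0 : Fin K → ℕ))
      = (box K M).erase 0 := by
    ext b
    simp only [Finset.mem_filter, Finset.mem_erase, and_comm (a := b ≠ 0)]
    refine and_congr_right fun _ => ⟨fun h hb => by simp [hb] at h, fun hb => ?_⟩
    obtain ⟨i, hi⟩ := Function.ne_iff.1 hb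
    exact Finset.prod_lt_prod (fun t _ => pois_pos (lam_pos hc0 t) _)
      (fun t _ => pois_le_pois_zero (lam_pos hc0 t) (lam_lt_one hc0 hc1 t) _)
      ⟨i, Finset.mem_univ i, pois_lt_pois_zero (lam_pos hc0 i) (lam_lt_one hc0 hc1 i) hi⟩
  have h2 : atomP c (0 : Fin K → ℕ) + ∑ b ∈ (box K M).erase 0, atomP c b
      = ∑ b ∈ box K M, atomP c b :=
    Finset.add_sum_erase _ _ (mem_box.2 fun i => Nat.zero_le M)
  rw [h1]
  linarith

lemma atomP_zero_eq (c : ℝ) (K : ℕ) :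
    atomP c (0 : Fin K → ℕ) = Real.exp (-∑ i ∈ Finset.range K, lam c i) := by
  rw [← Finset.sum_neg_distrib, Real.exp_sum,
    ← Fin.prod_univ_eq_prod_range (fun i : ℕ => Real.exp (-lam c i))]
  exact Finset.prod_congr rfl fun i _ => pois_zero _

/-- For `c ≥ c₀` the atoms on a suitable box have almost full mass and, up to `ε`, satisfy the
hypothesis of the greedy lemma. -/
lemma exists_good_box {c₀ : ℝ} (h0 : 0 < c₀) (h1 : c₀ < 1)
    (heq : Real.exp (c₀ / 2 + c₀ ^ 2 / 4) * Real.sqrt (1 - c₀) = 1 / 2) {c : ℝ} (hc : c₀ ≤ c)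
    {ε : ℝ} (hε : 0 < ε) :
    ∃ K M : ℕ, 1 ≤ ∑ j ∈ box K M, atomP c j + ε ∧ ∀ j ∈ box K M,
      atomP c j ≤ ∑ b ∈ (box K M).filter (fun b => atomP c b < atomP c j), atomP c b + ε := by
  have hcpos : 0 < c := h0.trans_le hc
  have hboxes : ∀ K : ℕ, ∀ᶠ M in atTop, 1 - ε / 2 < ∑ j ∈ box K M, atomP c j := fun K =>
    (tendsto_sum_box c K).eventually (lt_mem_nhds (by linarith))
  rcases le_or_gt 1 c with hc1 | hc1
  · obtain ⟨K, hK⟩ := exists_atomP_le_of_one_le hc1 hε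
    obtain ⟨M, hM⟩ := (hboxes K).exists
    refine ⟨K, M, by linarith, fun j _ => ?_⟩
    have := Finset.sum_nonneg fun b (_ : b ∈ (box K M).filter
      (fun b => atomP c b < atomP c j)) => atomP_nonneg hcpos b
    linarith [hK j]
  · have hcge : 0.82 ≤ c := (threshold_ge h0 h1 heq).trans hc
    have hlog : ∀ᶠ K : ℕ in atTop, 2 * atomP c (0 : Fin K → ℕ) < 1 + ε / 2 := by
      have ht : Tendsto (fun K => 2 * Real.exp (-∑ i ∈ Finset.range K, lam c₀ i)) atTop (𝓝 1) := by
        have := ((Real.continuous_exp.tendsto _).comp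
          (hasSum_lam_threshold h0 h1 heq).tendsto_sum_nat.neg).const_mul 2
        rwa [Real.exp_neg, Real.exp_log two_pos, mul_inv_cancel₀ two_ne_zero] at this
      filter_upwards [ht.eventually (gt_mem_nhds (show (1 : ℝ) < 1 + ε / 2 by linarith))] with K hK
      refine lt_of_le_of_lt ?_ hK
      rw [atomP_zero_eq]
      gcongr with i
      unfold lam
      gcongr
    have hlam : ∀ᶠ K : ℕ in atTop, lam c (K - 2) < ε := by
      have := (hasSum_lam hcpos hc1).summable.tendsto_atTop_zero.comp (tendsto_sub_atTop_nat 2)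
      exact this.eventually (gt_mem_nhds hε)
    obtain ⟨K, hK1, hK2, hK3⟩ := (hlog.and (hlam.and (eventually_ge_atTop 2))).exists
    obtain ⟨M, hM1, hM2⟩ := ((hboxes K).and (eventually_ge_atTop 1)).exists
    refine ⟨K, M, by linarith, fun j hj => ?_⟩
    by_cases hj0 : j = 0
    · subst hj0
      exact atomP_zero_le hcpos hc1 hK1.le hM1.le
    · exact atomP_le_of_ne_zero hcge hc1 hM2 hε hK3 hK2.le j hj hj0

/-! ### Limiting probabilities fill the unit interval -/

lemma gProb_mem_Icc {n : ℕ} {p : ℝ} (hp0 : 0 ≤ p) (hp1 : p ≤ 1) (A : SimpleGraph (Fin n) → Prop) :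
    gProb n p A ∈ Set.Icc (0 : ℝ) 1 := by
  rw [gProb_eq_gEx]
  constructor
  · refine Finset.sum_nonneg fun G _ => mul_nonneg (gWeight_nonneg hp0 hp1 G) ?_
    dsimp only
    split_ifs <;> norm_num
  · refine le_of_le_of_eq (Finset.sum_le_sum fun G _ =>
      mul_le_mul_of_nonneg_left ?_ (gWeight_nonneg hp0 hp1 G)) (gEx_one (n := n) p)
    dsimp only
    split_ifs <;> norm_num
end

/-- For `c ≥ c₀` (with `c₀ ∈ (0,1)` the solution of `e^{c/2+c²/4}√(1-c) = 1/2`),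
the closure of the set of limiting probabilities of FO sentences in `G(n,c/n)` is `[0,1]`. -/
theorem closure_limFOProbs_eq_Icc (c₀ : ℝ) (hc₀0 : 0 < c₀) (hc₀1 : c₀ < 1)
    (heq : Real.exp (c₀ / 2 + c₀ ^ 2 / 4) * Real.sqrt (1 - c₀) = 1 / 2)
    (c : ℝ) (hc : c₀ ≤ c) :
    closure (limFOProbs c) = Set.Icc 0 1 := by
  have hcpos : 0 < c := hc₀0.trans_le hc
  apply Set.Subset.antisymm
  · refine closure_minimal ?_ isClosed_Icc
    rintro x ⟨φ, hφ⟩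
    exact isClosed_Icc.mem_of_tendsto hφ (Eventually.of_forall fun n =>
      gProb_mem_Icc (edgeP_nonneg hcpos n) (edgeP_le_one c n) _)
  · rintro x ⟨hx0, hx1⟩
    rw [Metric.mem_closure_iff]
    intro ε hε
    obtain ⟨K, M, hbox, hcond⟩ := exists_good_box hc₀0 hc₀1 heq hc (half_pos hε)
    obtain ⟨S, hS1, hS2, -⟩ := exists_subset_sum_near (fun j : Fin K → ℕ => atomP c j) (box K M)
      hcond (fun j _ => atomP_nonneg hcpos j) x hx0 (hx1.trans hbox)
    refine ⟨_, sum_prod_pois_mem_limFOProbs hcpos S, ?_⟩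
    rw [Real.dist_eq, abs_lt]
    change x - ε / 2 ≤ ∑ j ∈ S, ∏ i : Fin K, pois (lam c i) (j i) at hS1
    change ∑ j ∈ S, ∏ i : Fin K, pois (lam c i) (j i) ≤ x at hS2
    constructor <;> linarith
end

section
/- Let 0 < c < c₀, where c₀ ∈ (0,1) is the unique positive solution of e^{c/2+c²/4}·√(1−c) = 1/2. Then 1 − e^{−f(c)} < 1/2 < e^{−f(c)}, and the open interval (1 − e^{−f(c)}, e^{−f(c)}) is disjoint from L̄_c; in particular L̄_c has a gap in [0,1]. -/
/-!
For `0 < c < 1` put `g = e ^ (-f(c))`. Every sentence `φ` splits forests asymptotically in a trivial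
way, so that the limiting probability of `φ` is `≥ g` or `≤ 1 - g`; both bounds are closed conditions
and therefore survive passage to the closure.

* Forests satisfy a zero-one law. By a composition argument for Ehrenfeucht–Fraïssé types
  (`realize_iff`), the truth of `φ` in a graph depends only on how many components of each rank-`k`
  type there are, counted up to a threshold. There are finitely many types, and every component of a
  forest is a tree; so, choosing a tree for each type that trees realize, any two forests containing
  each chosen tree sufficiently often as a component agree on `φ` (`exists_trees`).
* `G(n, c/n)` contains each fixed tree arbitrarily often as a component, with probability tending to
  one, by the second moment method (`tendsto_copies_lt`). The copies are counted only along
  embeddings that respect a partition of the vertices into blocks, so that an embedding is determined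
  by its range and no automorphisms have to be divided out.
* `G(n, c/n)` is a forest with limiting probability at least `g`, by Harris' inequality applied to the
  absence of all cycles (`isAcyclic_lower`). Only this lower bound is needed: the exact limit is not.

Hence either `φ` holds in all typical forests or `¬ φ` does, and one of the two has limiting
probability at least `g` (`limFOProbs_dichotomy`). Finally `f(c) = ∑_{k ≥ 3} c ^ k / (2 * k)` is
strictly increasing, so `g > 1 / 2` for `c < c₀`.
-/

open Filter Topology FirstOrder

namespace FOGap

/-! ### Ehrenfeucht–Fraïssé types of the pieces of a graph -/

/-- The atomic type of an `r`-tuple of optional vertices: for each pair of indices, whether both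
entries are the same vertex, and whether they are adjacent vertices. -/
abbrev Atom (r : ℕ) : Type := Fin r → Fin r → Prop × Prop

/-- Rank-`k` Ehrenfeucht–Fraïssé types of `r`-tuples of optional vertices. A rank-`k+1` type
records the atomic type, the rank-`k` type after appending the undefined entry `none`, and the set
of rank-`k` types obtained by appending a vertex. -/
def Code : ℕ → ℕ → Type
  | 0, r => Atom r
  | k + 1, r => Atom r × Code k (r + 1) × Set (Code k (r + 1))

instance finite_code : ∀ k r : ℕ, Finite (Code k r)
  | 0, r => inferInstanceAs (Finite (Atom r))
  | k + 1, r => by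
    have := finite_code k (r + 1)
    exact inferInstanceAs (Finite (Atom r × Code k (r + 1) × Set (Code k (r + 1))))

/-- The atomic type recorded by a rank-`k` type. -/
def Code.atom : {k r : ℕ} → Code k r → Atom r
  | 0, _, c => c
  | _ + 1, _, c => c.1

variable {V W : Type}

/-- The atomic type of the tuple `a` in `G`. -/
def atomType (G : SimpleGraph V) {r : ℕ} (a : Fin r → Option V) : Atom r := fun i j =>
  (∃ v, a i = some v ∧ a j = some v, ∃ u v, a i = some u ∧ a j = some v ∧ G.Adj u v)

/-- The rank-`k` type of the tuple `a` in `G`, where moves are confined to the vertex set `S`. -/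
def code (G : SimpleGraph V) (S : Set V) : (k : ℕ) → {r : ℕ} → (Fin r → Option V) → Code k r
  | 0, _, a => atomType G a
  | k + 1, r, a =>
    (atomType G a, code G S k (Fin.snoc (α := fun _ : Fin (r + 1) => Option V) a none),
      {c | ∃ x ∈ S, code G S k (Fin.snoc (α := fun _ : Fin (r + 1) => Option V) a (some x)) = c})

lemma atom_code (G : SimpleGraph V) (S : Set V) (k : ℕ) {r : ℕ} (a : Fin r → Option V) :
    (code G S k a).atom = atomType G a := by
  cases k <;> rfl

/-- Types are invariant under isomorphisms from a graph onto an induced piece of another graph. -/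
lemma code_map (G : SimpleGraph V) (H : SimpleGraph W) (S : Set W) (e : V → W)
    (he : Function.Injective e) (hS : Set.range e = S)
    (hadj : ∀ u v, H.Adj (e u) (e v) ↔ G.Adj u v) (k : ℕ) :
    ∀ {r : ℕ} (a : Fin r → Option V),
      code H S k (fun i => (a i).map e) = code G Set.univ k a := by
  have hat : ∀ {r : ℕ} (a : Fin r → Option V),
      atomType H (fun i => (a i).map e) = atomType G a := by
    intro r a
    funext i j
    simp only [atomType, Option.map_eq_some_iff, Prod.mk.injEq, eq_iff_iff]
    constructor
    · constructor
      · rintro ⟨_, ⟨u, hu, rfl⟩, ⟨v, hv, h⟩⟩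
        obtain rfl := he h
        exact ⟨_, hu, hv⟩
      · rintro ⟨v, h1, h2⟩
        exact ⟨_, ⟨v, h1, rfl⟩, ⟨v, h2, rfl⟩⟩
    · constructor
      · rintro ⟨_, _, ⟨u, hu, rfl⟩, ⟨v, hv, rfl⟩, h⟩
        exact ⟨u, v, hu, hv, (hadj _ _).1 h⟩
      · rintro ⟨u, v, hu, hv, h⟩
        exact ⟨_, _, ⟨u, hu, rfl⟩, ⟨v, hv, rfl⟩, (hadj _ _).2 h⟩
  have hsn : ∀ {r : ℕ} (a : Fin r → Option V) (o : Option V),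
      (Fin.snoc (α := fun _ : Fin (r + 1) => Option W) (fun i => (a i).map e) (o.map e)) =
        fun i => ((Fin.snoc (α := fun _ : Fin (r + 1) => Option V) a o : Fin (r + 1) → Option V)
          i).map e := by
    intro r a o
    funext i
    refine Fin.lastCases ?_ (fun i => ?_) i <;> simp
  induction k with
  | zero => intro r a; exact hat a
  | succ k ih =>
    intro r a
    refine Prod.ext (hat a) (Prod.ext ?_ ?_)
    · have h := hsn a none
      simp only [Option.map_none] at h
      simp only [code]
      rw [h, ih]
    · have key : ∀ v, code H S k (Fin.snoc (α := fun _ : Fin (r + 1) => Option W)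
          (fun i => (a i).map e) (some (e v))) =
          code G Set.univ k (Fin.snoc (α := fun _ : Fin (r + 1) => Option V) a (some v)) := by
        intro v
        have h := hsn a (some v)
        simp only [Option.map_some] at h
        rw [h, ih]
      ext c
      subst hS
      simp [code, key]

/-! ### Multisets agreeing up to a threshold -/

open scoped Classical in
/-- Two multisets agree up to threshold `k` if all multiplicities, truncated at `k`, coincide. -/
def Sim {α : Type} (k : ℕ) (M N : Multiset α) : Prop :=
  ∀ x, min (M.count x) k = min (N.count x) k

namespace Sim
variable {α β : Type} {k : ℕ} {M N : Multiset α}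

lemma symm (h : Sim k M N) : Sim k N M := fun x => (h x).symm

lemma mem (h : Sim (k + 1) M N) {x : α} (hx : x ∈ M) : x ∈ N := by
  classical
  have h1 := Multiset.count_pos.2 hx
  have h2 := h x
  refine Multiset.count_pos.1 ?_
  grind

lemma cons (h : Sim k M N) (x : α) : Sim k (x ::ₘ M) (x ::ₘ N) := by
  classical
  intro y
  have h2 := h y
  simp only [Multiset.count_cons]
  grind

lemma of_cons {x : α} (h : Sim (k + 1) (x ::ₘ M) (x ::ₘ N)) : Sim k M N := by
  classical
  intro y
  have h2 := h y
  simp only [Multiset.count_cons] at h2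
  grind

lemma map [Finite α] (h : Sim k M N) (f : α → β) : Sim k (M.map f) (N.map f) := by
  classical
  have := Fintype.ofFinite α
  have hs : ∀ (K : Multiset α) (y : β), (K.map f).count y =
      ∑ x ∈ (Finset.univ : Finset α).filter (fun x => y = f x), K.count x := by
    intro K y
    rw [Multiset.count_map, ← Multiset.toFinset_sum_count_eq]
    rw [← Finset.sum_subset (Finset.filter_subset_filter _ (Finset.subset_univ K.toFinset))]
    · apply Finset.sum_congr_of_eq_on_inter <;> simp +contextual
    · simp +contextual
  have hmin : ∀ (s : Finset α) (p q : α → ℕ), (∀ x, min (p x) k = min (q x) k) →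
      min (∑ x ∈ s, p x) k = min (∑ x ∈ s, q x) k := by
    intro s p q hpq
    induction s using Finset.induction_on with
    | empty => rfl
    | insert a s ha ih =>
      rw [Finset.sum_insert ha, Finset.sum_insert ha]
      have := hpq a
      omega
  intro y
  rw [hs, hs]
  exact hmin _ _ _ h

end Sim

/-! ### Composition over connected components -/

open scoped Classical in
/-- The restriction of a vertex to a set, undefined off the set. -/
noncomputable def restr (S : Set V) (v : V) : Option V := if v ∈ S then some v else none

lemma restr_eq_some {S : Set V} {u v : V} : restr S u = some v ↔ u ∈ S ∧ u = v := by
  simp [restr]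

/-- The rank-`k` type of the part of the tuple `a` lying in the component `C`. -/
noncomputable def compCode (G : SimpleGraph V) (k : ℕ) {r : ℕ} (a : Fin r → V)
    (C : G.ConnectedComponent) : Code k r :=
  code G C.supp k (fun i => restr C.supp (a i))

/-- The multiset of the rank-`k` types of all components of `G`. -/
noncomputable def compTypes [Finite V] (G : SimpleGraph V) (k : ℕ) {r : ℕ} (a : Fin r → V) :
    Multiset (Code k r) :=
  have : Fintype G.ConnectedComponent := Fintype.ofFinite _
  (Finset.univ : Finset G.ConnectedComponent).val.map (compCode G k a)

lemma mem_compTypes [Finite V] (G : SimpleGraph V) (k : ℕ) {r : ℕ} (a : Fin r → V)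
    (c : Code k r) : c ∈ compTypes G k a ↔ ∃ C, compCode G k a C = c := by
  simp [compTypes]

lemma atom_compCode_fst (G : SimpleGraph V) (k : ℕ) {r : ℕ} (a : Fin r → V)
    (C : G.ConnectedComponent) (i j : Fin r) :
    ((compCode G k a C).atom i j).1 ↔ a i ∈ C.supp ∧ a i = a j := by
  rw [compCode, atom_code]
  simp only [atomType, restr_eq_some]
  grind

lemma atom_compCode_snd (G : SimpleGraph V) (k : ℕ) {r : ℕ} (a : Fin r → V)
    (C : G.ConnectedComponent) (i j : Fin r) :
    ((compCode G k a C).atom i j).2 ↔ a i ∈ C.supp ∧ G.Adj (a i) (a j) := by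
  rw [compCode, atom_code]
  simp only [atomType, restr_eq_some]
  constructor
  · rintro ⟨u, v, ⟨h1, rfl⟩, ⟨h2, rfl⟩, h⟩
    exact ⟨h1, h⟩
  · rintro ⟨h1, h⟩
    exact ⟨_, _, ⟨h1, rfl⟩, ⟨(C.mem_supp_congr_adj h).1 h1, rfl⟩, h⟩

/-- The atomic type of the whole tuple is read off the components containing its entries. -/
lemma atoms_of_sim [Finite V] [Finite W] {G : SimpleGraph V} {H : SimpleGraph W} {k r : ℕ}
    {a : Fin r → V} {b : Fin r → W} (h : Sim (k + 1) (compTypes G k a) (compTypes H k b))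
    (i j : Fin r) : (a i = a j → b i = b j) ∧ (G.Adj (a i) (a j) → H.Adj (b i) (b j)) := by
  have hm : compCode G k a (G.connectedComponentMk (a i)) ∈ compTypes G k a :=
    (mem_compTypes _ _ _ _).2 ⟨_, rfl⟩
  obtain ⟨D, hD⟩ := (mem_compTypes _ _ _ _).1 (h.mem hm)
  constructor
  · intro e
    have h1 := (atom_compCode_fst G k a (G.connectedComponentMk (a i)) i j).2 ⟨rfl, e⟩
    rw [← hD] at h1
    exact ((atom_compCode_fst ..).1 h1).2
  · intro e
    have h1 := (atom_compCode_snd G k a (G.connectedComponentMk (a i)) i j).2 ⟨rfl, e⟩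
    rw [← hD] at h1
    exact ((atom_compCode_snd ..).1 h1).2

lemma restr_snoc (S : Set V) {r : ℕ} (a : Fin r → V) (x : V) :
    (fun i => restr S ((Fin.snoc (α := fun _ : Fin (r + 1) => V) a x : Fin (r + 1) → V) i)) =
      Fin.snoc (α := fun _ : Fin (r + 1) => Option V) (fun i => restr S (a i)) (restr S x) := by
  funext i
  refine Fin.lastCases ?_ (fun i => ?_) i <;> simp

/-- A move in the component `C` changes the type of `C` to one of its recorded options, and the
type of every other component to its recorded idle option. -/
lemma compTypes_snoc [Finite V] (G : SimpleGraph V) (k : ℕ) {r : ℕ} (a : Fin r → V)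
    (C : G.ConnectedComponent) :
    ∃ M : Multiset (Code (k + 1) r),
      compTypes G (k + 1) a = compCode G (k + 1) a C ::ₘ M ∧
      ∀ x ∈ C.supp, compTypes G k (Fin.snoc (α := fun _ : Fin (r + 1) => V) a x) =
        code G C.supp k (Fin.snoc (α := fun _ : Fin (r + 1) => Option V)
          (fun i => restr C.supp (a i)) (some x)) ::ₘ M.map (fun c => c.2.1) := by
  classical
  let _ : Fintype G.ConnectedComponent := Fintype.ofFinite _
  have hu : (Finset.univ : Finset G.ConnectedComponent).val =
      C ::ₘ (Finset.univ.erase C).val := by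
    rw [Finset.erase_val, Multiset.cons_erase (Finset.mem_univ C)]
  refine ⟨(Finset.univ.erase C).val.map (compCode G (k + 1) a), ?_, ?_⟩
  · rw [compTypes, hu, Multiset.map_cons]
  · intro x hx
    rw [compTypes, hu, Multiset.map_cons, Multiset.map_map]
    congr 1
    · rw [compCode, restr_snoc]
      simp [restr, hx]
    · refine Multiset.map_congr rfl fun D hD => ?_
      have hDC : D ≠ C := (Finset.mem_erase.1 hD).1
      have hxD : x ∉ D.supp := fun h => hDC (h.symm.trans hx)
      have hr : restr D.supp x = none := by simp [restr, hxD]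
      simp only [compCode, restr_snoc, hr, Function.comp]
      rfl

/-- If the component types agree up to a threshold, a move in `G` can be answered in `H`: play in a
component of the same type, which costs one unit of threshold. -/
lemma sim_move [Finite V] [Finite W] {G : SimpleGraph V} {H : SimpleGraph W} {k r : ℕ}
    {a : Fin r → V} {b : Fin r → W}
    (h : Sim (k + 2) (compTypes G (k + 1) a) (compTypes H (k + 1) b)) (x : V) :
    ∃ y : W, Sim (k + 1) (compTypes G k (Fin.snoc (α := fun _ : Fin (r + 1) => V) a x))
      (compTypes H k (Fin.snoc (α := fun _ : Fin (r + 1) => W) b y)) := by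
  set C := G.connectedComponentMk x with hC
  have hm : compCode G (k + 1) a C ∈ compTypes G (k + 1) a := (mem_compTypes _ _ _ _).2 ⟨_, rfl⟩
  obtain ⟨D, hD⟩ := (mem_compTypes _ _ _ _).1 (h.mem hm)
  obtain ⟨M, hM1, hM2⟩ := compTypes_snoc G k a C
  obtain ⟨N, hN1, hN2⟩ := compTypes_snoc H k b D
  have hx : code G C.supp k (Fin.snoc (α := fun _ : Fin (r + 1) => Option V)
      (fun i => restr C.supp (a i)) (some x)) ∈ (compCode G (k + 1) a C).2.2 := ⟨x, rfl, rfl⟩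
  rw [← hD] at hx
  obtain ⟨y, hy, hxy⟩ := hx
  refine ⟨y, ?_⟩
  rw [hM2 x rfl, hN2 y hy, hxy]
  rw [hM1, hN1, hD] at h
  exact (h.of_cons.map _).cons _

/-- Graphs whose component types agree up to a threshold satisfy the same formulas of bounded
quantifier depth. -/
lemma realize_iff {r : ℕ} (φ : Language.graph.BoundedFormula Empty r) :
    ∃ k₀, ∀ k ≥ k₀, ∀ (n m : ℕ) (G : SimpleGraph (Fin n)) (H : SimpleGraph (Fin m))
      (a : Fin r → Fin n) (b : Fin r → Fin m),
      Sim (k + 1) (compTypes G k a) (compTypes H k b) →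
      (@Language.BoundedFormula.Realize Language.graph (Fin n) G.structure _ _ φ default a ↔
       @Language.BoundedFormula.Realize Language.graph (Fin m) H.structure _ _ φ default b) := by
  induction φ with
  | falsum => exact ⟨0, fun k _ n m G H a b _ => Iff.rfl⟩
  | equal t₁ t₂ =>
    refine ⟨0, fun k _ n m G H a b h => ?_⟩
    match t₁, t₂ with
    | .var (.inr i), .var (.inr j) =>
      exact ⟨(atoms_of_sim h i j).1, (atoms_of_sim h.symm i j).1⟩
    | .var (.inl e), _ => exact e.elim
    | _, .var (.inl e) => exact e.elim
    | .func f _, _ => exact Empty.elim f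
    | _, .func f _ => exact Empty.elim f
  | @rel r _ R ts =>
    refine ⟨0, fun k _ n m G H a b h => ?_⟩
    cases R
    have hv : ∀ t : Language.graph.Term (Empty ⊕ Fin r), ∃ i, t = .var (.inr i) := by
      intro t
      match t with
      | .var (.inr i) => exact ⟨i, rfl⟩
      | .var (.inl e) => exact e.elim
      | .func f _ => exact Empty.elim f
    obtain ⟨i, hi⟩ := hv (ts 0)
    obtain ⟨j, hj⟩ := hv (ts 1)
    change G.Adj (@Language.Term.realize Language.graph _ G.structure _ _ (ts 0))
      (@Language.Term.realize Language.graph _ G.structure _ _ (ts 1)) ↔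
      H.Adj (@Language.Term.realize Language.graph _ H.structure _ _ (ts 0))
      (@Language.Term.realize Language.graph _ H.structure _ _ (ts 1))
    rw [hi, hj]
    exact ⟨(atoms_of_sim h i j).2, (atoms_of_sim h.symm i j).2⟩
  | imp φ ψ ih₁ ih₂ =>
    obtain ⟨k₁, h₁⟩ := ih₁
    obtain ⟨k₂, h₂⟩ := ih₂
    refine ⟨max k₁ k₂, fun k hk n m G H a b h => ?_⟩
    have e₁ := h₁ k (le_trans (le_max_left _ _) hk) n m G H a b h
    have e₂ := h₂ k (le_trans (le_max_right _ _) hk) n m G H a b h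
    simp only [Language.BoundedFormula.realize_imp, e₁, e₂]
  | all φ ih =>
    obtain ⟨k₁, h₁⟩ := ih
    refine ⟨k₁ + 1, fun k hk n m G H a b h => ?_⟩
    obtain ⟨k, rfl⟩ : ∃ k', k = k' + 1 := ⟨k - 1, by omega⟩
    simp only [Language.BoundedFormula.realize_all]
    constructor
    · intro hG y
      obtain ⟨x, hx⟩ := sim_move h.symm y
      exact (h₁ k (by omega) _ _ _ _ _ _ hx.symm).1 (hG x)
    · intro hH x
      obtain ⟨y, hy⟩ := sim_move h x
      exact (h₁ k (by omega) _ _ _ _ _ _ hy).2 (hH y)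

end FOGap

namespace FOGap

/-! ### Tree components -/

/-- The map `e`, if injective, embeds `T` onto a union of connected components of `G`: adjacency
corresponds along `e`, and no edge of `G` leaves the range. -/
def IsCopy {t n : ℕ} (T : SimpleGraph (Fin t)) (G : SimpleGraph (Fin n)) (e : Fin t → Fin n) :
    Prop :=
  (∀ i j, G.Adj (e i) (e j) ↔ T.Adj i j) ∧ ∀ i, ∀ v ∉ Set.range e, ¬ G.Adj (e i) v

/-- With `[t * m] ⊆ [n]` cut into `t` blocks of length `m`, the map sending `i` to the element of
the `i`-th block selected by `f`. Such a map is determined by its range. -/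
def blockEmb (t n : ℕ) (f : Fin t → Fin (n / t)) : Fin t → Fin n :=
  fun i => Fin.castLE (Nat.mul_div_le n t) (finProdFinEquiv (i, f i))

lemma blockEmb_eq {t n : ℕ} {f g : Fin t → Fin (n / t)} {i j : Fin t}
    (h : blockEmb t n f i = blockEmb t n g j) : i = j ∧ f i = g j := by
  have := finProdFinEquiv.injective (Fin.castLE_injective _ h)
  exact Prod.mk.injEq .. ▸ this

lemma blockEmb_injective {t n : ℕ} (f : Fin t → Fin (n / t)) :
    Function.Injective (blockEmb t n f) := fun _ _ h => (blockEmb_eq h).1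

open scoped Classical in
/-- The number of components of `G` onto which some block map embeds `T`. -/
noncomputable def copies {t n : ℕ} (T : SimpleGraph (Fin t)) (G : SimpleGraph (Fin n)) : ℕ :=
  (Finset.univ.filter fun f : Fin t → Fin (n / t) => IsCopy T G (blockEmb t n f)).card

lemma IsCopy.range_eq {t n : ℕ} {T : SimpleGraph (Fin t)} {G : SimpleGraph (Fin n)}
    {e : Fin t → Fin n} (h : IsCopy T G e) (hT : T.Connected) (i : Fin t) :
    Set.range e = (G.connectedComponentMk (e i)).supp := by
  have hadj : ∀ u v, u ∈ Set.range e → G.Adj u v → v ∈ Set.range e := by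
    rintro _ v ⟨j, rfl⟩ huv
    by_contra hv
    exact h.2 j v hv huv
  apply Set.Subset.antisymm
  · rintro _ ⟨j, rfl⟩
    let φ : T →g G := ⟨e, fun {a b} hab => (h.1 a b).2 hab⟩
    exact SimpleGraph.ConnectedComponent.sound ((hT.preconnected j i).map φ)
  · intro v hv
    obtain ⟨p⟩ : G.Reachable (e i) v := (SimpleGraph.ConnectedComponent.exact hv).symm
    have : ∀ u w, G.Walk u w → u ∈ Set.range e → w ∈ Set.range e := by
      intro u w p
      induction p with
      | nil => exact id
      | cons hab _ ih => exact fun hu => ih (hadj _ _ hu hab)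
    exact this _ _ p ⟨i, rfl⟩

/-- Two copies of a connected graph along block maps that meet coincide. -/
lemma IsCopy.eq_of_meet {t n : ℕ} {T : SimpleGraph (Fin t)} {G : SimpleGraph (Fin n)}
    (hT : T.Connected) {f g : Fin t → Fin (n / t)} (hf : IsCopy T G (blockEmb t n f))
    (hg : IsCopy T G (blockEmb t n g)) {i j : Fin t}
    (h : G.connectedComponentMk (blockEmb t n f i) = G.connectedComponentMk (blockEmb t n g j)) :
    f = g := by
  have hr : Set.range (blockEmb t n f) = Set.range (blockEmb t n g) := by
    rw [hf.range_eq hT i, hg.range_eq hT j, h]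
  funext l
  obtain ⟨l', hl⟩ : blockEmb t n f l ∈ Set.range (blockEmb t n g) := hr ▸ ⟨l, rfl⟩
  obtain ⟨rfl, h2⟩ := blockEmb_eq hl
  exact h2.symm

/-- The rank-`k` type of a whole graph, with no marked vertices. -/
def graphType {t : ℕ} (T : SimpleGraph (Fin t)) (k : ℕ) : Code k 0 :=
  code T Set.univ k (fun i => i.elim0)

lemma compCode_eq_graphType {t n : ℕ} {T : SimpleGraph (Fin t)} {G : SimpleGraph (Fin n)}
    (k : ℕ) (a : Fin 0 → Fin n) (C : G.ConnectedComponent) (e : Fin t → Fin n)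
    (he : Function.Injective e) (hr : Set.range e = C.supp)
    (hadj : ∀ i j, G.Adj (e i) (e j) ↔ T.Adj i j) : compCode G k a C = graphType T k := by
  rw [graphType, ← code_map T G C.supp e he hr hadj, compCode]
  congr 1
  funext i
  exact i.elim0

open scoped Classical in
lemma copies_le_count {t n : ℕ} {T : SimpleGraph (Fin t)} (hT : T.Connected)
    (G : SimpleGraph (Fin n)) (k : ℕ) (a : Fin 0 → Fin n) :
    copies T G ≤ (compTypes G k a).count (graphType T k) := by
  obtain ⟨i₀⟩ := hT.nonempty
  rw [compTypes, Multiset.count_map]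
  refine Finset.card_le_card_of_injOn (t := Finset.filter _ _)
    (fun f => G.connectedComponentMk (blockEmb t n f i₀)) ?_ ?_
  · intro f hf
    have hf := (Finset.mem_filter.1 hf).2
    refine Finset.mem_filter.2 ⟨@Finset.mem_univ _ (_) _, ?_⟩
    exact (compCode_eq_graphType k a _ _ (blockEmb_injective f) (hf.range_eq hT i₀) hf.1).symm
  · intro f hf g hg h
    exact IsCopy.eq_of_meet hT (Finset.mem_filter.1 hf).2 (Finset.mem_filter.1 hg).2 h

lemma exists_tree_of_component {n : ℕ} {G : SimpleGraph (Fin n)} (hG : G.IsAcyclic) (k : ℕ)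
    (a : Fin 0 → Fin n) (C : G.ConnectedComponent) :
    ∃ (t : ℕ) (T : SimpleGraph (Fin t)), T.IsTree ∧ compCode G k a C = graphType T k := by
  have := Fintype.ofFinite C
  let e : Fin (Fintype.card C) ≃ C := (Fintype.equivFin C).symm
  refine ⟨_, C.toSimpleGraph.comap e,
    (SimpleGraph.Iso.comap e C.toSimpleGraph).isTree_iff.2 (hG.isTree_connectedComponent C), ?_⟩
  refine compCode_eq_graphType k a C (fun i => (e i : Fin n)) ?_ ?_ ?_
  · exact Subtype.val_injective.comp e.injective
  · change Set.range (Subtype.val ∘ e) = _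
    rw [e.surjective.range_comp]
    exact Subtype.range_val
  · intro i j
    rfl

/-- Finitely many trees control a first-order sentence on forests: there are only finitely many
rank-`k` types, and every type realized by a tree is realized by one of the chosen trees. -/
lemma exists_trees (φ : Language.graph.Sentence) :
    ∃ (K : ℕ) (ι : Type) (_ : Finite ι) (t : ι → ℕ) (T : ∀ i, SimpleGraph (Fin (t i))),
      (∀ i, (T i).IsTree) ∧
      ∀ (n m : ℕ) (G : SimpleGraph (Fin n)) (H : SimpleGraph (Fin m)),
        G.IsAcyclic → H.IsAcyclic → (∀ i, K ≤ copies (T i) G) → (∀ i, K ≤ copies (T i) H) →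
        (gSat G φ ↔ gSat H φ) := by
  classical
  obtain ⟨k, hk⟩ := realize_iff (r := 0) φ
  have hex : ∀ c : {c : Code k 0 // ∃ (t : ℕ) (T : SimpleGraph (Fin t)),
      T.IsTree ∧ c = graphType T k}, ∃ (t : ℕ) (T : SimpleGraph (Fin t)),
      T.IsTree ∧ c.1 = graphType T k := fun c => c.2
  choose t T hT hc using hex
  refine ⟨k + 1, _, inferInstance, t, T, hT, ?_⟩
  intro n m G H hG hH hKG hKH
  have key : ∀ (n : ℕ) (G : SimpleGraph (Fin n)) (a : Fin 0 → Fin n), G.IsAcyclic →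
      (∀ i, k + 1 ≤ copies (T i) G) → ∀ c : Code k 0,
      min ((compTypes G k a).count c) (k + 1) =
        if ∃ (t : ℕ) (T : SimpleGraph (Fin t)), T.IsTree ∧ c = graphType T k then k + 1 else 0 := by
    intro n G a hG hK c
    split_ifs with h
    · have h1 := hK ⟨c, h⟩
      have h2 := copies_le_count (hT ⟨c, h⟩).connected G k a
      rw [← hc ⟨c, h⟩] at h2
      exact min_eq_right (h1.trans h2)
    · have : c ∉ compTypes G k a := by
        intro hmem
        obtain ⟨C, rfl⟩ := (mem_compTypes _ _ _ _).1 hmem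
        exact h (exists_tree_of_component hG k a C)
      rw [Multiset.count_eq_zero.2 this]
      simp
  refine hk k le_rfl n m G H default default fun c => ?_
  have e₁ := key n G default hG hKG c
  have e₂ := key m H default hH hKH c
  exact e₁.trans e₂.symm

end FOGap

namespace FOGap

/-! ### The binomial random graph -/

section Prob
open scoped Classical
variable {n : ℕ} {p : ℝ}

lemma ncard_edgeSet_eq (G : SimpleGraph (Fin n)) : G.edgeSet.ncard = G.edgeFinset.card := by
  rw [← SimpleGraph.coe_edgeFinset, Set.ncard_coe_finset]

lemma ncard_edgeSet_le (G : SimpleGraph (Fin n)) : G.edgeSet.ncard ≤ n.choose 2 := by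
  rw [ncard_edgeSet_eq]
  simpa using G.card_edgeFinset_le_card_choose_two

lemma gWeight_nonneg (h0 : 0 ≤ p) (h1 : p ≤ 1) (G : SimpleGraph (Fin n)) : 0 ≤ gWeight n p G := by
  have : 0 ≤ 1 - p := by linarith
  unfold gWeight
  positivity

lemma gProb_eq (A : SimpleGraph (Fin n) → Prop) :
    gProb n p A = ∑ G : SimpleGraph (Fin n), gWeight n p G * if A G then 1 else 0 := by
  rw [gProb, finsum_eq_sum_of_fintype]
  simp

/-- The probability that all edges of `E₁` are present and all edges of `E₂` are absent. -/
lemma gProb_edges (E₁ E₂ : Finset (Sym2 (Fin n)))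
    (h₁ : E₁ ⊆ (⊤ : SimpleGraph (Fin n)).edgeFinset) (h₂ : E₂ ⊆ (⊤ : SimpleGraph (Fin n)).edgeFinset)
    (hd : Disjoint E₁ E₂) :
    gProb n p (fun G => E₁ ⊆ G.edgeFinset ∧ Disjoint E₂ G.edgeFinset) =
      p ^ E₁.card * (1 - p) ^ E₂.card := by
  set U := (⊤ : SimpleGraph (Fin n)).edgeFinset with hU
  have hUc : U.card = n.choose 2 := by
    rw [hU, SimpleGraph.card_edgeFinset_top_eq_card_choose_two, Fintype.card_fin]
  -- Expand the product over all pairs of (weight if present) + (weight if absent).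
  have hprod := Finset.prod_add (fun e => if e ∈ E₂ then 0 else p)
    (fun e => if e ∈ E₁ then 0 else 1 - p) U
  have hlhs : ∏ e ∈ U, ((if e ∈ E₂ then 0 else p) + (if e ∈ E₁ then 0 else 1 - p)) =
      p ^ E₁.card * (1 - p) ^ E₂.card := by
    have : ∀ e ∈ U, ((if e ∈ E₂ then 0 else p) + (if e ∈ E₁ then 0 else 1 - p)) =
        (if e ∈ E₁ then p else 1) * (if e ∈ E₂ then 1 - p else 1) := by
      intro e _
      by_cases h1 : e ∈ E₁
      · have h2 : e ∉ E₂ := Finset.disjoint_left.1 hd h1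
        simp [h1, h2]
      · by_cases h2 : e ∈ E₂ <;> simp [h1, h2]
    rw [Finset.prod_congr rfl this, Finset.prod_mul_distrib, Finset.prod_ite_mem,
      Finset.prod_ite_mem, Finset.inter_eq_right.2 h₁, Finset.inter_eq_right.2 h₂]
    simp
  rw [← hlhs, hprod, gProb_eq]
  refine Finset.sum_bij' (fun G _ => G.edgeFinset)
    (fun S _ => SimpleGraph.fromEdgeSet (S : Set (Sym2 (Fin n)))) ?_ ?_ ?_ ?_ ?_
  · intro G _
    rw [Finset.mem_powerset]
    exact SimpleGraph.edgeFinset_mono le_top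
  · simp
  · intro G _
    simp
  · intro S hS
    rw [Finset.mem_powerset] at hS
    ext e
    simp only [SimpleGraph.mem_edgeFinset, SimpleGraph.edgeSet_fromEdgeSet]
    refine ⟨fun h => h.1, fun h => ⟨h, ?_⟩⟩
    have := hS h
    rw [hU, SimpleGraph.mem_edgeFinset] at this
    exact SimpleGraph.not_isDiag_of_mem_edgeSet _ this
  · intro G _
    have hGU : G.edgeFinset ⊆ U := SimpleGraph.edgeFinset_mono le_top
    have e1 : ∏ e ∈ G.edgeFinset, (if e ∈ E₂ then 0 else p) =
        if Disjoint E₂ G.edgeFinset then p ^ G.edgeFinset.card else 0 := by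
      split_ifs with h
      · rw [Finset.prod_congr rfl (g := fun _ => p)]
        · simp
        · intro e he
          rw [if_neg (Finset.disjoint_right.1 h he)]
      · obtain ⟨e, he2, heG⟩ := Finset.not_disjoint_iff.1 h
        exact Finset.prod_eq_zero heG (by simp [he2])
    have e2 : ∏ e ∈ U \ G.edgeFinset, (if e ∈ E₁ then 0 else 1 - p) =
        if E₁ ⊆ G.edgeFinset then (1 - p) ^ (n.choose 2 - G.edgeFinset.card) else 0 := by
      split_ifs with h
      · rw [Finset.prod_congr rfl (g := fun _ => 1 - p)]
        · rw [Finset.prod_const, Finset.card_sdiff_of_subset hGU, hUc]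
        · intro e he
          rw [if_neg (fun h' => (Finset.mem_sdiff.1 he).2 (h h'))]
      · obtain ⟨e, he1, heG⟩ := Finset.not_subset.1 h
        exact Finset.prod_eq_zero (Finset.mem_sdiff.2 ⟨h₁ he1, heG⟩) (by simp [he1])
    rw [e1, e2, gWeight, ncard_edgeSet_eq]
    by_cases a : E₁ ⊆ G.edgeFinset <;> by_cases b : Disjoint E₂ G.edgeFinset <;> simp [a, b]

lemma sum_gWeight : ∑ G : SimpleGraph (Fin n), gWeight n p G = 1 := by
  have := gProb_edges (n := n) (p := p) ∅ ∅ (by simp) (by simp) (by simp)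
  rw [gProb_eq] at this
  simpa using this

lemma gProb_nonneg (h0 : 0 ≤ p) (h1 : p ≤ 1) (A : SimpleGraph (Fin n) → Prop) :
    0 ≤ gProb n p A := by
  rw [gProb_eq]
  refine Finset.sum_nonneg fun G _ => mul_nonneg (gWeight_nonneg h0 h1 G) ?_
  split_ifs <;> norm_num

lemma gProb_mono (h0 : 0 ≤ p) (h1 : p ≤ 1) {A B : SimpleGraph (Fin n) → Prop}
    (h : ∀ G, A G → B G) : gProb n p A ≤ gProb n p B := by
  rw [gProb_eq, gProb_eq]
  refine Finset.sum_le_sum fun G _ => mul_le_mul_of_nonneg_left ?_ (gWeight_nonneg h0 h1 G)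
  have := h G
  split_ifs <;> simp_all

lemma gProb_not (A : SimpleGraph (Fin n) → Prop) :
    gProb n p (fun G => ¬ A G) = 1 - gProb n p A := by
  rw [← sum_gWeight (n := n) (p := p), gProb_eq, gProb_eq, ← Finset.sum_sub_distrib]
  refine Finset.sum_congr rfl fun G _ => ?_
  by_cases h : A G <;> simp [h]

lemma gProb_or_le (h0 : 0 ≤ p) (h1 : p ≤ 1) (A B : SimpleGraph (Fin n) → Prop) :
    gProb n p (fun G => A G ∨ B G) ≤ gProb n p A + gProb n p B := by
  rw [gProb_eq, gProb_eq, gProb_eq, ← Finset.sum_add_distrib]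
  refine Finset.sum_le_sum fun G _ => ?_
  have := gWeight_nonneg h0 h1 G
  by_cases a : A G <;> by_cases b : B G <;> simp [a, b, this]

/-- The union bound. -/
lemma gProb_exists_le (h0 : 0 ≤ p) (h1 : p ≤ 1) {ι : Type} [Fintype ι]
    (A : ι → SimpleGraph (Fin n) → Prop) :
    gProb n p (fun G => ∃ i, A i G) ≤ ∑ i, gProb n p (A i) := by
  simp only [gProb_eq]
  rw [Finset.sum_comm]
  refine Finset.sum_le_sum fun G _ => ?_
  rw [← Finset.mul_sum]
  refine mul_le_mul_of_nonneg_left ?_ (gWeight_nonneg h0 h1 G)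
  split_ifs with h
  · obtain ⟨i, hi⟩ := h
    have := Finset.single_le_sum (f := fun i => if A i G then (1 : ℝ) else 0)
      (fun j _ => by split_ifs <;> norm_num) (Finset.mem_univ i)
    simpa [hi] using this
  · exact Finset.sum_nonneg fun j _ => by split_ifs <;> norm_num

/-- Harris' inequality for decreasing events. -/
lemma harris (h0 : 0 ≤ p) (h1 : p ≤ 1) (A B : SimpleGraph (Fin n) → Prop)
    (hA : ∀ G H, G ≤ H → A H → A G) (hB : ∀ G H, G ≤ H → B H → B G) :
    gProb n p A * gProb n p B ≤ gProb n p (fun G => A G ∧ B G) := by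
  have hμ : ∀ G H : SimpleGraph (Fin n),
      gWeight n p G * gWeight n p H ≤ gWeight n p (G ⊓ H) * gWeight n p (G ⊔ H) := by
    intro G H
    have hc : (G ⊓ H).edgeSet.ncard + (G ⊔ H).edgeSet.ncard =
        G.edgeSet.ncard + H.edgeSet.ncard := by
      rw [SimpleGraph.edgeSet_inf, SimpleGraph.edgeSet_sup, add_comm]
      exact Set.ncard_union_add_ncard_inter _ _
    have a1 := ncard_edgeSet_le G
    have a2 := ncard_edgeSet_le H
    have a3 := ncard_edgeSet_le (G ⊓ H)
    have a4 := ncard_edgeSet_le (G ⊔ H)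
    apply le_of_eq
    unfold gWeight
    rw [mul_mul_mul_comm, mul_mul_mul_comm (p ^ (G ⊓ H).edgeSet.ncard), ← pow_add, ← pow_add,
      ← pow_add, ← pow_add, hc]
    congr 2
    omega
  have hmono : ∀ C : SimpleGraph (Fin n) → Prop, (∀ G H, G ≤ H → C H → C G) →
      Monotone (fun G => if C G then (0 : ℝ) else 1) := by
    intro C hC G H hGH
    have := hC G H hGH
    dsimp only
    split_ifs <;> simp_all
  have hnn : ∀ C : SimpleGraph (Fin n) → Prop,
      0 ≤ (fun G => if C G then (0 : ℝ) else 1) := by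
    intro C G
    dsimp only
    split_ifs <;> norm_num
  have := fkg (μ := gWeight n p) (f := fun G => if A G then (0 : ℝ) else 1)
    (g := fun G => if B G then (0 : ℝ) else 1) (fun G => gWeight_nonneg h0 h1 G) (hnn A) (hnn B)
    (hmono A hA) (hmono B hB) hμ
  rw [sum_gWeight, one_mul] at this
  have hneg : ∀ C : SimpleGraph (Fin n) → Prop,
      ∑ G, gWeight n p G * (if C G then (0 : ℝ) else 1) = 1 - gProb n p C := by
    intro C
    rw [← gProb_not, gProb_eq]
    simp
  have hboth : ∑ G, gWeight n p G * ((if A G then (0 : ℝ) else 1) * if B G then (0 : ℝ) else 1) =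
      (∑ G, gWeight n p G) - gProb n p A - gProb n p B + gProb n p (fun G => A G ∧ B G) := by
    rw [gProb_eq, gProb_eq, gProb_eq, ← Finset.sum_sub_distrib,
      ← Finset.sum_sub_distrib, ← Finset.sum_add_distrib]
    refine Finset.sum_congr rfl fun G _ => ?_
    by_cases a : A G <;> by_cases b : B G <;> simp [a, b]
  rw [hneg, hneg, hboth, sum_gWeight] at this
  nlinarith

/-- Iterated Harris inequality for the absence of edge sets. -/
lemma harris_avoid (h0 : 0 ≤ p) (h1 : p ≤ 1) (𝒞 : Finset (Finset (Sym2 (Fin n))))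
    (h𝒞 : ∀ E ∈ 𝒞, E ⊆ (⊤ : SimpleGraph (Fin n)).edgeFinset) :
    ∏ E ∈ 𝒞, (1 - p ^ E.card) ≤ gProb n p (fun G => ∀ E ∈ 𝒞, ¬ E ⊆ G.edgeFinset) := by
  induction 𝒞 using Finset.induction_on with
  | empty =>
    rw [gProb_eq]
    simp [sum_gWeight]
  | insert E 𝒞 hE ih =>
    rw [Finset.prod_insert hE]
    have ih := ih fun F hF => h𝒞 F (Finset.mem_insert_of_mem hF)
    have hdec : ∀ F : Finset (Sym2 (Fin n)), ∀ G H : SimpleGraph (Fin n), G ≤ H →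
        ¬ F ⊆ H.edgeFinset → ¬ F ⊆ G.edgeFinset :=
      fun F G H hGH h h' => h (h'.trans (SimpleGraph.edgeFinset_mono hGH))
    have hP : gProb n p (fun G => ¬ E ⊆ G.edgeFinset) = 1 - p ^ E.card := by
      have := gProb_edges (p := p) E ∅ (h𝒞 E (Finset.mem_insert_self _ _)) (by simp) (by simp)
      simp only [Finset.disjoint_empty_left, and_true, Finset.card_empty, pow_zero, mul_one] at this
      rw [gProb_not, this]
    have hH := harris h0 h1 (fun G => ¬ E ⊆ G.edgeFinset)
      (fun G => ∀ F ∈ 𝒞, ¬ F ⊆ G.edgeFinset) (hdec E)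
      (fun G H hGH h F hF => hdec F G H hGH (h F hF))
    rw [hP] at hH
    have hnn : 0 ≤ 1 - p ^ E.card := by
      have := pow_le_one₀ (n := E.card) h0 h1
      linarith
    refine (mul_le_mul_of_nonneg_left ih hnn).trans (hH.trans ?_)
    refine gProb_mono h0 h1 fun G hG F hF => ?_
    rcases Finset.mem_insert.1 hF with rfl | hF
    · exact hG.1
    · exact hG.2 F hF

end Prob

end FOGap

namespace FOGap

/-! ### The probability of being acyclic -/

section Acyclic
open scoped Classical

/-- The edge set of the closed cyclic sequence `v`. -/
noncomputable def cycleEdges {n : ℕ} (k : ℕ) (v : ZMod (k + 3) → Fin n) : Finset (Sym2 (Fin n)) :=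
  Finset.univ.image fun i => s(v i, v (i + 1))

/-- The edge sets of cycles of length `k + 3` in the complete graph on `Fin n`. -/
noncomputable def cycles (n k : ℕ) : Finset (Finset (Sym2 (Fin n))) :=
  (Finset.univ.filter fun v : ZMod (k + 3) → Fin n => Function.Injective v).image (cycleEdges k)

lemma two_ne_zero_zmod (k : ℕ) : (2 : ZMod (k + 3)) ≠ 0 := by
  intro h
  have h' : ((2 : ℕ) : ZMod (k + 3)) = 0 := by exact_mod_cast h
  rw [ZMod.natCast_eq_zero_iff] at h'
  have := Nat.le_of_dvd (by norm_num) h'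
  omega

lemma card_of_mem_cycles {n k : ℕ} {E : Finset (Sym2 (Fin n))} (hE : E ∈ cycles n k) :
    E.card = k + 3 := by
  obtain ⟨v, hv, rfl⟩ := Finset.mem_image.1 hE
  have hv := (Finset.mem_filter.1 hv).2
  rw [cycleEdges, Finset.card_image_of_injective, Finset.card_univ, ZMod.card]
  intro i j hij
  rcases Sym2.eq_iff.1 hij with ⟨h, _⟩ | ⟨h1, h2⟩
  · exact hv h
  · have h1 := hv h1
    have h2 := hv h2
    exfalso
    apply two_ne_zero_zmod k
    linear_combination h2 - h1

lemma cycles_subset {n k : ℕ} {E : Finset (Sym2 (Fin n))} (hE : E ∈ cycles n k) :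
    E ⊆ (⊤ : SimpleGraph (Fin n)).edgeFinset := by
  obtain ⟨v, hv, rfl⟩ := Finset.mem_image.1 hE
  have hv := (Finset.mem_filter.1 hv).2
  intro e he
  obtain ⟨i, _, rfl⟩ := Finset.mem_image.1 he
  rw [SimpleGraph.mem_edgeFinset, SimpleGraph.mem_edgeSet, SimpleGraph.top_adj]
  intro h
  have h := hv h
  have : Fact (1 < k + 3) := ⟨by omega⟩
  exact one_ne_zero (left_eq_add.1 h)

/-- Each cycle of length `k + 3` is traversed by at least `2 (k + 3)` cyclic sequences, its
rotations and reflections. -/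
lemma card_cycles_le (n k : ℕ) : 2 * (k + 3) * (cycles n k).card ≤ n ^ (k + 3) := by
  have hle : 2 * (k + 3) * (cycles n k).card ≤
      (Finset.univ.filter fun v : ZMod (k + 3) → Fin n => Function.Injective v).card := by
    apply Finset.mul_card_image_le_card
    intro E hE
    obtain ⟨v, hv, rfl⟩ := Finset.mem_image.1 hE
    have hv := (Finset.mem_filter.1 hv).2
    have hcard : (Finset.univ : Finset (Bool × ZMod (k + 3))).card = 2 * (k + 3) := by
      rw [Finset.card_univ, Fintype.card_prod, Fintype.card_bool, ZMod.card]
    rw [← hcard]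
    refine Finset.card_le_card_of_injOn
      (fun q x => v (if q.1 then q.2 + x else q.2 - x)) ?_ ?_
    · rintro ⟨b, a⟩ -
      refine Finset.mem_coe.2 (Finset.mem_filter.2
        ⟨Finset.mem_filter.2 ⟨Finset.mem_univ _, ?_⟩, ?_⟩)
      · intro x y hxy
        have := hv hxy
        cases b <;> simpa using this
      · ext e
        simp only [cycleEdges, Finset.mem_image, Finset.mem_univ, true_and]
        cases b
        · simp only [Bool.false_eq_true, if_false]
          constructor
          · rintro ⟨i, rfl⟩
            refine ⟨a - i - 1, ?_⟩
            exact Sym2.eq_swap.trans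
              (congrArg₂ (fun x y => s(v x, v y)) (by ring) (by ring))
          · rintro ⟨i, rfl⟩
            refine ⟨a - i - 1, ?_⟩
            exact Sym2.eq_swap.trans
              (congrArg₂ (fun x y => s(v x, v y)) (by ring) (by ring))
        · simp only [if_true]
          constructor
          · rintro ⟨i, rfl⟩
            refine ⟨a + i, ?_⟩
            exact congrArg₂ (fun x y => s(v x, v y)) (by ring) (by ring)
          · rintro ⟨i, rfl⟩
            refine ⟨i - a, ?_⟩
            exact congrArg₂ (fun x y => s(v x, v y)) (by ring) (by ring)
    · rintro ⟨b, a⟩ - ⟨b', a'⟩ - h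
      have e0 := hv (congrFun h 0)
      have e1 := hv (congrFun h 1)
      have h2 := two_ne_zero_zmod k
      cases b <;> cases b' <;> simp at e0 e1 <;> subst e0 <;> first
        | rfl
        | exact absurd (by linear_combination e1) h2
        | exact absurd (by linear_combination -e1) h2
  refine hle.trans ((Finset.card_filter_le _ _).trans ?_)
  rw [Finset.card_univ, Fintype.card_fun, ZMod.card, Fintype.card_fin]

lemma exists_cycle_of_not_isAcyclic {n : ℕ} {G : SimpleGraph (Fin n)} (hG : ¬ G.IsAcyclic) :
    ∃ k < n, ∃ E ∈ cycles n k, E ⊆ G.edgeFinset := by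
  unfold SimpleGraph.IsAcyclic at hG
  push Not at hG
  obtain ⟨u, w, hw⟩ := hG
  obtain ⟨k, hk⟩ : ∃ k, w.length = k + 3 := ⟨w.length - 3, by have := hw.three_le_length; omega⟩
  let v : ZMod (k + 3) → Fin n := fun i => w.getVert i.val
  have hlt : ∀ i : ZMod (k + 3), i.val < k + 3 := fun i => ZMod.val_lt i
  have hv : Function.Injective v := by
    intro i j hij
    apply ZMod.val_injective (k + 3)
    apply hw.getVert_injOn' _ _ hij
    · have := hlt i
      simp only [Set.mem_ofPred_eq]; omega
    · have := hlt j
      simp only [Set.mem_ofPred_eq]; omega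
  refine ⟨k, ?_, cycleEdges k v, ?_, ?_⟩
  · have := Fintype.card_le_of_injective v hv
    rw [ZMod.card, Fintype.card_fin] at this
    omega
  · exact Finset.mem_image_of_mem _ (Finset.mem_filter.2 ⟨Finset.mem_univ _, hv⟩)
  · intro e he
    obtain ⟨i, _, rfl⟩ := Finset.mem_image.1 he
    rw [SimpleGraph.mem_edgeFinset, SimpleGraph.mem_edgeSet]
    have hi := hlt i
    have hadj := w.adj_getVert_succ (i := i.val) (by omega)
    have hsucc : v (i + 1) = w.getVert (i.val + 1) := by
      have : Fact (1 < k + 3) := ⟨by omega⟩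
      simp only [v, ZMod.val_add, ZMod.val_one]
      by_cases h : i.val + 1 < k + 3
      · rw [Nat.mod_eq_of_lt h]
      · have h' : i.val + 1 = k + 3 := by omega
        rw [h', Nat.mod_self, SimpleGraph.Walk.getVert_zero, ← hk,
          SimpleGraph.Walk.getVert_length]
    rw [hsucc]
    exact hadj

/-- The limiting expected numbers `c ^ k / (2 * k)` of cycles of length `k ≥ 3` sum to `f(c)`. -/
lemma hasSum_cycles {c : ℝ} (h0 : 0 < c) (h1 : c < 1) :
    HasSum (fun k : ℕ => c ^ (k + 3) / (2 * (k + 3)))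
      (-Real.log (1 - c) / 2 - c / 2 - c ^ 2 / 4) := by
  have h := Real.hasSum_pow_div_log_of_abs_lt_one (x := c) (by rw [abs_lt]; constructor <;> linarith)
  have h := ((hasSum_nat_add_iff' 2).2 h).div_const 2
  have e₁ : (fun k : ℕ => c ^ (k + 3) / (2 * ((k : ℝ) + 3))) =
      fun i : ℕ => c ^ (i + 2 + 1) / (((i + 2 : ℕ) : ℝ) + 1) / 2 := by
    funext k
    have e : ((k + 2 : ℕ) : ℝ) + 1 = k + 3 := by push_cast; ring
    rw [div_div, e, mul_comm]
  have e₂ : -Real.log (1 - c) / 2 - c / 2 - c ^ 2 / 4 =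
      (-Real.log (1 - c) - ∑ i ∈ Finset.range 2, c ^ (i + 1) / ((i : ℝ) + 1)) / 2 := by
    norm_num [Finset.sum_range_succ]
    ring
  rw [e₁, e₂]
  exact h

/-- The quantity `e ^ (c / 2 + c ^ 2 / 4) * √(1 - c)` is `e ^ (-f(c))`. -/
lemma exp_eq {c : ℝ} (h1 : c < 1) :
    Real.exp (c / 2 + c ^ 2 / 4) * Real.sqrt (1 - c) =
      Real.exp (-(-Real.log (1 - c) / 2 - c / 2 - c ^ 2 / 4)) := by
  have h : 0 < 1 - c := by linarith
  have : Real.sqrt (1 - c) = Real.exp (Real.log (1 - c) / 2) := by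
    rw [Real.exp_half, Real.exp_log h]
  rw [this, ← Real.exp_add]
  congr 1
  ring

/-- By Harris' inequality, `G(n, c/n)` avoids all cycles with probability at least the product over
the cycles of the probabilities of avoiding each, and there are at most `n ^ k / (2 * k)` cycles of
length `k`. The factor `1 - c / n` comes from `1 - x ≥ exp (-x / (1 - c / n))` for
`0 ≤ x ≤ c / n`. -/
lemma isAcyclic_lower {c : ℝ} (h0 : 0 < c) (h1 : c < 1) {n : ℕ} (hn : 0 < n) :
    Real.exp (-(-Real.log (1 - c) / 2 - c / 2 - c ^ 2 / 4) / (1 - c / n)) ≤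
      gProb n (c / n) (fun G => G.IsAcyclic) := by
  have hn' : (1 : ℝ) ≤ n := by exact_mod_cast hn
  set p := c / n with hp
  have hp0 : 0 < p := by positivity
  have hp1 : p < 1 := by
    rw [hp, div_lt_one (by linarith)]
    linarith
  have hcov : gProb n p (fun G => ∀ E ∈ (Finset.range n).biUnion (cycles n),
      ¬ E ⊆ G.edgeFinset) ≤ gProb n p (fun G => G.IsAcyclic) := by
    refine gProb_mono hp0.le hp1.le fun G hG => ?_
    by_contra hc
    obtain ⟨k, hk, E, hE, hEG⟩ := exists_cycle_of_not_isAcyclic hc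
    exact hG E (Finset.mem_biUnion.2 ⟨k, Finset.mem_range.2 hk, hE⟩) hEG
  refine le_trans ?_ hcov
  refine le_trans ?_ (harris_avoid hp0.le hp1.le _ ?_)
  swap
  · intro E hE
    obtain ⟨k, _, hE⟩ := Finset.mem_biUnion.1 hE
    exact cycles_subset hE
  rw [Finset.prod_biUnion]
  swap
  · intro i _ j _ hij
    refine Finset.disjoint_left.2 fun E hi hj => hij ?_
    have := card_of_mem_cycles hi
    have := card_of_mem_cycles hj
    omega
  have hterm : ∀ k ∈ Finset.range n,
      Real.exp (-(c ^ (k + 3) / (2 * (k + 3))) / (1 - p)) ≤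
        ∏ E ∈ cycles n k, (1 - p ^ E.card) := by
    intro k _
    rw [Finset.prod_congr rfl (fun E hE => by rw [card_of_mem_cycles hE]), Finset.prod_const]
    have hx0 : 0 < p ^ (k + 3) := by positivity
    have hxp : p ^ (k + 3) ≤ p := pow_le_of_le_one hp0.le hp1.le (by omega)
    have hbase : Real.exp (-(p ^ (k + 3) / (1 - p))) ≤ 1 - p ^ (k + 3) := by
      have hpos : 0 < 1 - p ^ (k + 3) := by linarith
      rw [← Real.le_log_iff_exp_le hpos]
      refine le_trans ?_ (Real.one_sub_inv_le_log_of_pos hpos)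
      have e : 1 - (1 - p ^ (k + 3))⁻¹ = -(p ^ (k + 3) / (1 - p ^ (k + 3))) := by
        field_simp
        ring
      rw [e, neg_le_neg_iff]
      apply div_le_div_of_nonneg_left hx0.le (by linarith) (by linarith)
    refine le_trans ?_ (pow_le_pow_left₀ (Real.exp_pos _).le hbase _)
    rw [← Real.exp_nat_mul, Real.exp_le_exp]
    have hN : (2 * ((k : ℝ) + 3)) * (cycles n k).card ≤ (n : ℝ) ^ (k + 3) := by
      exact_mod_cast card_cycles_le n k
    have hcp : (n : ℝ) ^ (k + 3) * p ^ (k + 3) = c ^ (k + 3) := by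
      rw [← mul_pow, hp]
      congr 1
      field_simp
    have hmul : (cycles n k).card * p ^ (k + 3) ≤ c ^ (k + 3) / (2 * (k + 3)) := by
      rw [le_div_iff₀ (by positivity), ← hcp]
      nlinarith
    have := div_le_div_of_nonneg_right hmul (by linarith : 0 ≤ 1 - p)
    rw [neg_div, mul_neg, neg_le_neg_iff, ← mul_div_assoc]
    exact this
  refine le_trans ?_ (Finset.prod_le_prod (fun k _ => (Real.exp_pos _).le) hterm)
  rw [← Real.exp_sum, Real.exp_le_exp, ← Finset.sum_div, Finset.sum_neg_distrib]
  apply div_le_div_of_nonneg_right _ (by linarith)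
  rw [neg_le_neg_iff]
  exact sum_le_hasSum _ (fun k _ => by positivity) (hasSum_cycles h0 h1)

end Acyclic

end FOGap

namespace FOGap

/-! ### Second moment bound for the number of copies of a tree -/

section Moment
open scoped Classical
variable {t n : ℕ} {p : ℝ}

/-- The edges that must be present for `e` to be a copy of `T`. -/
noncomputable def reqEdges (T : SimpleGraph (Fin t)) (e : Fin t → Fin n) :
    Finset (Sym2 (Fin n)) := T.edgeFinset.image (Sym2.map e)

/-- The edges that must be absent for `e` to be a copy of `T`. -/
noncomputable def forbEdges (T : SimpleGraph (Fin t)) (e : Fin t → Fin n) :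
    Finset (Sym2 (Fin n)) :=
  ((Finset.univ : Finset (Fin t × Fin n)).image fun q => s(e q.1, q.2)).filter
    fun x => ¬ x.IsDiag ∧ x ∉ reqEdges T e

lemma mem_reqEdges {T : SimpleGraph (Fin t)} {e : Fin t → Fin n} {x : Sym2 (Fin n)} :
    x ∈ reqEdges T e ↔ ∃ i j, T.Adj i j ∧ s(e i, e j) = x := by
  simp only [reqEdges, Finset.mem_image, SimpleGraph.mem_edgeFinset]
  constructor
  · rintro ⟨y, hy, rfl⟩
    induction y using Sym2.ind with
    | _ i j => exact ⟨i, j, hy, rfl⟩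
  · rintro ⟨i, j, h, rfl⟩
    exact ⟨s(i, j), h, rfl⟩

lemma mem_forbEdges {T : SimpleGraph (Fin t)} {e : Fin t → Fin n} {x : Sym2 (Fin n)} :
    x ∈ forbEdges T e ↔ (∃ i v, s(e i, v) = x) ∧ ¬ x.IsDiag ∧ x ∉ reqEdges T e := by
  simp [forbEdges]

lemma isCopy_iff {T : SimpleGraph (Fin t)} {e : Fin t → Fin n} (he : Function.Injective e)
    (G : SimpleGraph (Fin n)) :
    IsCopy T G e ↔ reqEdges T e ⊆ G.edgeFinset ∧ Disjoint (forbEdges T e) G.edgeFinset := by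
  constructor
  · rintro ⟨h1, h2⟩
    constructor
    · intro x hx
      obtain ⟨i, j, hij, rfl⟩ := mem_reqEdges.1 hx
      exact SimpleGraph.mem_edgeFinset.2 ((h1 i j).2 hij)
    · refine Finset.disjoint_left.2 fun x hx hxG => ?_
      obtain ⟨⟨i, v, rfl⟩, _, h3⟩ := mem_forbEdges.1 hx
      have hadj : G.Adj (e i) v := SimpleGraph.mem_edgeFinset.1 hxG
      by_cases hv : v ∈ Set.range e
      · obtain ⟨j, rfl⟩ := hv
        exact h3 (mem_reqEdges.2 ⟨i, j, (h1 i j).1 hadj, rfl⟩)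
      · exact h2 i v hv hadj
  · rintro ⟨h1, h2⟩
    have key : ∀ i v, G.Adj (e i) v → s(e i, v) ∈ reqEdges T e := by
      intro i v h
      by_contra hx
      refine Finset.disjoint_left.1 h2 (mem_forbEdges.2 ⟨⟨i, v, rfl⟩, ?_, hx⟩)
        (SimpleGraph.mem_edgeFinset.2 h)
      exact h.ne
    constructor
    · intro i j
      constructor
      · intro h
        obtain ⟨a, b, hab, hs⟩ := mem_reqEdges.1 (key _ _ h)
        rcases Sym2.eq_iff.1 hs with ⟨ha, hb⟩ | ⟨ha, hb⟩
        · rw [← he ha, ← he hb]; exact hab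
        · rw [← he ha, ← he hb]; exact hab.symm
      · intro h
        exact SimpleGraph.mem_edgeFinset.1 (h1 (mem_reqEdges.2 ⟨i, j, h, rfl⟩))
    · intro i v hv h
      obtain ⟨a, b, hab, hs⟩ := mem_reqEdges.1 (key _ _ h)
      rcases Sym2.eq_iff.1 hs with ⟨ha, hb⟩ | ⟨ha, hb⟩
      · exact hv ⟨b, hb⟩
      · exact hv ⟨a, ha⟩

lemma reqEdges_subset (T : SimpleGraph (Fin t)) {e : Fin t → Fin n} (he : Function.Injective e) :
    reqEdges T e ⊆ (⊤ : SimpleGraph (Fin n)).edgeFinset := by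
  intro x hx
  obtain ⟨i, j, h, rfl⟩ := mem_reqEdges.1 hx
  rw [SimpleGraph.mem_edgeFinset, SimpleGraph.mem_edgeSet, SimpleGraph.top_adj]
  exact fun h' => h.ne (he h')

lemma forbEdges_subset (T : SimpleGraph (Fin t)) (e : Fin t → Fin n) :
    forbEdges T e ⊆ (⊤ : SimpleGraph (Fin n)).edgeFinset := by
  intro x hx
  obtain ⟨⟨i, v, rfl⟩, h, _⟩ := mem_forbEdges.1 hx
  rw [SimpleGraph.mem_edgeFinset, SimpleGraph.mem_edgeSet, SimpleGraph.top_adj]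
  exact h

lemma card_reqEdges {T : SimpleGraph (Fin t)} (hT : T.IsTree) {e : Fin t → Fin n}
    (he : Function.Injective e) : (reqEdges T e).card = t - 1 := by
  rw [reqEdges, Finset.card_image_of_injective _ (Sym2.map.injective he)]
  have := hT.card_edgeFinset
  rw [Fintype.card_fin] at this
  omega

lemma card_forbEdges_le (T : SimpleGraph (Fin t)) (e : Fin t → Fin n) :
    (forbEdges T e).card ≤ t * n := by
  refine (Finset.card_filter_le _ _).trans (Finset.card_image_le.trans ?_)
  simp

lemma gProb_isCopy {T : SimpleGraph (Fin t)} (hT : T.IsTree) {e : Fin t → Fin n}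
    (he : Function.Injective e) :
    gProb n p (fun G => IsCopy T G e) = p ^ (t - 1) * (1 - p) ^ (forbEdges T e).card := by
  simp only [isCopy_iff he]
  rw [gProb_edges _ _ (reqEdges_subset T he) (forbEdges_subset T e), card_reqEdges hT he]
  exact Finset.disjoint_right.2 fun x hx => (mem_forbEdges.1 hx).2.2

/-- Distinct block copies are almost independent: they are either incompatible or disjoint, and in
the latter case they share at most `t ^ 2` forbidden edges. -/
lemma gProb_isCopy_pair (h0 : 0 ≤ p) (h1 : p ≤ 1) {T : SimpleGraph (Fin t)} (hT : T.IsTree)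
    {f g : Fin t → Fin (n / t)} (hfg : f ≠ g) :
    gProb n p (fun G => IsCopy T G (blockEmb t n f) ∧ IsCopy T G (blockEmb t n g)) *
        (1 - p) ^ (t * t) ≤
      gProb n p (fun G => IsCopy T G (blockEmb t n f)) *
        gProb n p (fun G => IsCopy T G (blockEmb t n g)) := by
  by_cases hex : ∃ G, IsCopy T G (blockEmb t n f) ∧ IsCopy T G (blockEmb t n g)
  swap
  · have hz : gProb n p
        (fun G => IsCopy T G (blockEmb t n f) ∧ IsCopy T G (blockEmb t n g)) = 0 := by
      rw [gProb_eq]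
      refine Finset.sum_eq_zero fun G _ => ?_
      rw [if_neg (fun h => hex ⟨G, h⟩), mul_zero]
    rw [hz, zero_mul]
    exact mul_nonneg (gProb_nonneg h0 h1 _) (gProb_nonneg h0 h1 _)
  obtain ⟨G₀, hf, hg⟩ := hex
  have hne : ∀ i j, blockEmb t n f i ≠ blockEmb t n g j := fun i j h =>
    hfg (IsCopy.eq_of_meet hT.connected hf hg (congrArg _ h))
  have hfi := blockEmb_injective (n := n) f
  have hgi := blockEmb_injective (n := n) g
  rw [gProb_isCopy hT hfi, gProb_isCopy hT hgi]
  rw [isCopy_iff hfi] at hf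
  rw [isCopy_iff hgi] at hg
  simp only [isCopy_iff hfi, isCopy_iff hgi]
  have hev : gProb n p (fun G => (reqEdges T (blockEmb t n f) ⊆ G.edgeFinset ∧
      Disjoint (forbEdges T (blockEmb t n f)) G.edgeFinset) ∧
      (reqEdges T (blockEmb t n g) ⊆ G.edgeFinset ∧
      Disjoint (forbEdges T (blockEmb t n g)) G.edgeFinset)) =
      gProb n p (fun G =>
        reqEdges T (blockEmb t n f) ∪ reqEdges T (blockEmb t n g) ⊆ G.edgeFinset ∧
        Disjoint (forbEdges T (blockEmb t n f) ∪ forbEdges T (blockEmb t n g))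
          G.edgeFinset) := by
    congr 1
    funext G
    rw [Finset.union_subset_iff, Finset.disjoint_union_left]
    exact propext (and_and_and_comm)
  rw [hev, gProb_edges _ _
    (Finset.union_subset (reqEdges_subset T hfi) (reqEdges_subset T hgi))
    (Finset.union_subset (forbEdges_subset T _) (forbEdges_subset T _))
    (Disjoint.mono_left (Finset.union_subset hf.1 hg.1)
      (Finset.disjoint_union_left.2 ⟨hf.2, hg.2⟩).symm)]
  have hreq : (reqEdges T (blockEmb t n f) ∪ reqEdges T (blockEmb t n g)).card =
      (t - 1) + (t - 1) := by
    rw [Finset.card_union_of_disjoint, card_reqEdges hT hfi, card_reqEdges hT hgi]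
    refine Finset.disjoint_left.2 fun x hx hy => ?_
    obtain ⟨i, j, _, rfl⟩ := mem_reqEdges.1 hx
    obtain ⟨a, b, _, h⟩ := mem_reqEdges.1 hy
    rcases Sym2.eq_iff.1 h with ⟨h, _⟩ | ⟨h, _⟩
    · exact hne _ _ h.symm
    · exact hne _ _ h.symm
  have hforb := Finset.card_union_add_card_inter (forbEdges T (blockEmb t n f))
    (forbEdges T (blockEmb t n g))
  have hinter : (forbEdges T (blockEmb t n f) ∩ forbEdges T (blockEmb t n g)).card ≤ t * t := by
    have hsub : forbEdges T (blockEmb t n f) ∩ forbEdges T (blockEmb t n g) ⊆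
        (Finset.univ : Finset (Fin t × Fin t)).image
          fun q => s(blockEmb t n f q.1, blockEmb t n g q.2) := by
      intro x hx
      obtain ⟨hx, hy⟩ := Finset.mem_inter.1 hx
      obtain ⟨⟨i, v, rfl⟩, _⟩ := mem_forbEdges.1 hx
      obtain ⟨⟨j, w, h⟩, _⟩ := mem_forbEdges.1 hy
      rcases Sym2.eq_iff.1 h with ⟨h, _⟩ | ⟨rfl, _⟩
      · exact absurd h.symm (hne _ _)
      · exact Finset.mem_image.2 ⟨(i, j), Finset.mem_univ _, rfl⟩
    refine (Finset.card_le_card hsub).trans (Finset.card_image_le.trans ?_)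
    simp
  have hq0 : 0 ≤ 1 - p := by linarith
  rw [hreq, mul_assoc, ← pow_add, mul_mul_mul_comm, ← pow_add, ← pow_add]
  refine mul_le_mul_of_nonneg_left ?_ (by positivity)
  exact pow_le_pow_of_le_one hq0 (by linarith) (by omega)

/-- The expected number of block copies of `T`. -/
noncomputable def meanCopies (n : ℕ) (p : ℝ) (T : SimpleGraph (Fin t)) : ℝ :=
  ∑ f : Fin t → Fin (n / t), gProb n p (fun G => IsCopy T G (blockEmb t n f))

lemma meanCopies_ge (h0 : 0 ≤ p) (h1 : p ≤ 1) {T : SimpleGraph (Fin t)} (hT : T.IsTree) :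
    ((n / t : ℕ) : ℝ) ^ t * (p ^ (t - 1) * (1 - p) ^ (t * n)) ≤ meanCopies n p T := by
  have hq0 : 0 ≤ 1 - p := by linarith
  have : ∀ f ∈ (Finset.univ : Finset (Fin t → Fin (n / t))),
      p ^ (t - 1) * (1 - p) ^ (t * n) ≤ gProb n p (fun G => IsCopy T G (blockEmb t n f)) := by
    intro f _
    rw [gProb_isCopy hT (blockEmb_injective f)]
    refine mul_le_mul_of_nonneg_left ?_ (by positivity)
    exact pow_le_pow_of_le_one hq0 (by linarith) (card_forbEdges_le _ _)
  have := Finset.card_nsmul_le_sum _ _ _ this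
  simpa [meanCopies] using this

/-- Chebyshev's inequality for the number of copies. -/
lemma gProb_copies_lt (h0 : 0 ≤ p) (h1 : p < 1) {T : SimpleGraph (Fin t)} (hT : T.IsTree) (K : ℕ)
    (hpos : 0 < meanCopies n p T) (hK : 2 * (K : ℝ) ≤ meanCopies n p T) :
    gProb n p (fun G => copies T G < K) ≤
      4 * (meanCopies n p T)⁻¹ + 4 * (((1 - p) ^ (t * t))⁻¹ - 1) := by
  set μ := meanCopies n p T with hμ
  set A : (Fin t → Fin (n / t)) → SimpleGraph (Fin n) → Prop :=
    fun f G => IsCopy T G (blockEmb t n f) with hA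
  set X : SimpleGraph (Fin n) → ℝ := fun G => ∑ f, if A f G then (1 : ℝ) else 0 with hX
  have hXc : ∀ G, X G = copies T G := by
    intro G
    simp [hX, hA, copies]
  have hq : 0 < (1 - p) ^ (t * t) := by
    have : 0 < 1 - p := by linarith
    positivity
  have hE1 : ∑ G, gWeight n p G * X G = μ := by
    simp only [hX, Finset.mul_sum, hμ, meanCopies, gProb_eq]
    rw [Finset.sum_comm]
  have hE2 : ∑ G, gWeight n p G * X G ^ 2 = ∑ f, ∑ g, gProb n p (fun G => A f G ∧ A g G) := by
    simp only [gProb_eq]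
    have : ∀ G, gWeight n p G * X G ^ 2 =
        ∑ f, ∑ g, gWeight n p G * (if A f G ∧ A g G then 1 else 0) := by
      intro G
      simp only [hX, sq]
      rw [Finset.sum_mul_sum, Finset.mul_sum]
      refine Finset.sum_congr rfl fun f _ => ?_
      rw [Finset.mul_sum]
      refine Finset.sum_congr rfl fun g _ => ?_
      by_cases a : A f G <;> by_cases b : A g G <;> simp [a, b]
    rw [Finset.sum_congr rfl fun G _ => this G, Finset.sum_comm]
    refine Finset.sum_congr rfl fun f _ => ?_
    rw [Finset.sum_comm]
    refine Finset.sum_congr rfl fun g _ => Finset.sum_congr rfl fun G _ => ?_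
    by_cases a : A f G ∧ A g G <;> simp [a]
  have hE2le : ∑ G, gWeight n p G * X G ^ 2 ≤ μ + μ ^ 2 * ((1 - p) ^ (t * t))⁻¹ := by
    rw [hE2]
    have hpair : ∀ f g, gProb n p (fun G => A f G ∧ A g G) ≤
        (if f = g then gProb n p (A f) else 0) +
          gProb n p (A f) * gProb n p (A g) * ((1 - p) ^ (t * t))⁻¹ := by
      intro f g
      have hnn : 0 ≤ gProb n p (A f) * gProb n p (A g) * ((1 - p) ^ (t * t))⁻¹ :=
        mul_nonneg (mul_nonneg (gProb_nonneg h0 h1.le _) (gProb_nonneg h0 h1.le _))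
          (inv_nonneg.2 hq.le)
      split_ifs with h
      · subst h
        have := gProb_mono h0 h1.le (A := fun G => A f G ∧ A f G) (B := A f) fun G h => h.1
        linarith
      · rw [zero_add, ← div_eq_mul_inv, le_div_iff₀ hq]
        exact gProb_isCopy_pair h0 h1.le hT h
    refine (Finset.sum_le_sum fun f _ => Finset.sum_le_sum fun g _ => hpair f g).trans ?_
    apply le_of_eq
    simp only [Finset.sum_add_distrib, Finset.sum_ite_eq, Finset.mem_univ, if_true,
      ← Finset.sum_mul, ← Finset.mul_sum]
    rw [hμ, meanCopies]
    ring
  have hvar : ∑ G, gWeight n p G * (X G - μ) ^ 2 ≤ μ + μ ^ 2 * (((1 - p) ^ (t * t))⁻¹ - 1) := by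
    have : ∑ G, gWeight n p G * (X G - μ) ^ 2 =
        ∑ G, gWeight n p G * X G ^ 2 - 2 * μ * ∑ G, gWeight n p G * X G +
          μ ^ 2 * ∑ G : SimpleGraph (Fin n), gWeight n p G := by
      rw [Finset.mul_sum, Finset.mul_sum, ← Finset.sum_sub_distrib, ← Finset.sum_add_distrib]
      exact Finset.sum_congr rfl fun G _ => by ring
    rw [this, hE1, sum_gWeight]
    nlinarith
  have hcheb : gProb n p (fun G => copies T G < K) * (μ ^ 2 / 4) ≤
      ∑ G, gWeight n p G * (X G - μ) ^ 2 := by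
    rw [gProb_eq, Finset.sum_mul]
    refine Finset.sum_le_sum fun G _ => ?_
    rw [mul_assoc]
    refine mul_le_mul_of_nonneg_left ?_ (gWeight_nonneg h0 h1.le G)
    split_ifs with h
    · have : X G ≤ μ / 2 := by
        rw [hXc]
        have : (copies T G : ℝ) < K := by exact_mod_cast h
        linarith
      nlinarith
    · rw [zero_mul]
      positivity
  have h4 := hcheb.trans hvar
  rw [← le_div_iff₀ (by positivity)] at h4
  refine h4.trans (le_of_eq ?_)
  field_simp

/-- In `G(n, c/n)` every fixed tree occurs, with high probability, as a component arbitrarily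
often. -/
lemma tendsto_copies_lt {c : ℝ} (h0 : 0 < c) {T : SimpleGraph (Fin t)}
    (hT : T.IsTree) (K : ℕ) :
    Tendsto (fun n : ℕ => gProb n (c / n) (fun G => copies T G < K)) atTop (𝓝 0) := by
  have ht : 0 < t := by
    obtain ⟨i⟩ := hT.connected.nonempty
    exact i.pos
  have ht' : (0 : ℝ) < t := by exact_mod_cast ht
  have hp : Tendsto (fun n : ℕ => c / (n : ℝ)) atTop (𝓝 0) :=
    tendsto_const_div_atTop_nhds_zero_nat c
  have hp01 : ∀ᶠ n : ℕ in atTop, 0 ≤ c / (n : ℝ) ∧ c / (n : ℝ) < 1 := by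
    filter_upwards [hp.eventually_lt_const one_pos] with n hn
    exact ⟨by positivity, hn⟩
  have hmean : Tendsto (fun n : ℕ => meanCopies n (c / n) T) atTop atTop := by
    have hexp : Tendsto (fun n : ℕ => (1 + -c / (n : ℝ)) ^ n) atTop (𝓝 (Real.exp (-c))) :=
      Real.tendsto_one_add_div_pow_exp (-c)
    have hlim : Tendsto (fun n : ℕ => (n : ℝ) *
        (c ^ (t - 1) / (2 * t) ^ t * ((1 + -c / (n : ℝ)) ^ n) ^ t)) atTop atTop := by
      refine Tendsto.atTop_mul_pos (C := c ^ (t - 1) / (2 * t) ^ t * (Real.exp (-c)) ^ t)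
        (by positivity) tendsto_natCast_atTop_atTop ?_
      exact (hexp.pow t).const_mul _
    refine tendsto_atTop_mono' _ ?_ hlim
    filter_upwards [hp01, eventually_ge_atTop (2 * t)] with n hn hn2
    refine le_trans ?_ (meanCopies_ge hn.1 hn.2.le hT)
    have hnpos : (0 : ℝ) < n := by
      have : 0 < n := by omega
      exact_mod_cast this
    have hdiv : (n : ℝ) / (2 * t) ≤ ((n / t : ℕ) : ℝ) := by
      rw [div_le_iff₀ (by positivity)]
      have h2 : n ≤ (n / t) * (2 * t) := by
        have e1 := Nat.div_add_mod n t
        have e2 := Nat.mod_lt n ht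
        nlinarith
      exact_mod_cast h2
    have hq0 : 0 ≤ 1 - c / (n : ℝ) := by linarith [hn.2]
    have heq : (n : ℝ) * (c ^ (t - 1) / (2 * t) ^ t * ((1 + -c / (n : ℝ)) ^ n) ^ t) =
        ((n : ℝ) / (2 * t)) ^ t * ((c / n) ^ (t - 1) * (1 - c / n) ^ (t * n)) := by
      have e1 : (1 + -c / (n : ℝ)) = 1 - c / n := by ring
      have e2 : (n : ℝ) ^ t = n * n ^ (t - 1) := by
        rw [← pow_succ', Nat.sub_add_cancel ht]
      rw [e1, ← pow_mul, mul_comm n t, div_pow, div_pow, e2]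
      field_simp
    rw [heq]
    have hc0 : 0 ≤ c / (n : ℝ) := hn.1
    exact mul_le_mul_of_nonneg_right (pow_le_pow_left₀ (by positivity) hdiv _) (by positivity)
  have hup : Tendsto (fun n : ℕ => 4 * (meanCopies n (c / n) T)⁻¹ +
      4 * (((1 - c / (n : ℝ)) ^ (t * t))⁻¹ - 1)) atTop (𝓝 0) := by
    have e1 := (tendsto_inv_atTop_zero.comp hmean).const_mul 4
    have e2 : Tendsto (fun n : ℕ => 4 * (((1 - c / (n : ℝ)) ^ (t * t))⁻¹ - 1)) atTop
        (𝓝 (4 * (((1 - 0) ^ (t * t))⁻¹ - 1))) :=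
      ((((hp.const_sub 1).pow (t * t)).inv₀ (by simp)).sub_const 1).const_mul 4
    have e3 := e1.add e2
    simpa using e3
  refine squeeze_zero' ?_ ?_ hup
  · filter_upwards [hp01] with n hn
    exact gProb_nonneg hn.1 hn.2.le _
  · filter_upwards [hp01, hmean.eventually_ge_atTop (2 * (K : ℝ)), hmean.eventually_gt_atTop 0]
      with n hn hK hpos
    exact gProb_copies_lt hn.1 hn.2 hT K hpos hK

end Moment

end FOGap

namespace FOGap

/-! ### The gap -/

/-- All typical forests agree on a given sentence, so either the sentence or its negation has limiting
probability at least `e ^ (-f(c))`, the limiting lower bound on the probability of being a forest. -/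
lemma limFOProbs_dichotomy {c x : ℝ} (h0 : 0 < c) (h1 : c < 1) (hx : x ∈ limFOProbs c) :
    x ≤ 1 - Real.exp (c / 2 + c ^ 2 / 4) * Real.sqrt (1 - c) ∨
      Real.exp (c / 2 + c ^ 2 / 4) * Real.sqrt (1 - c) ≤ x := by
  obtain ⟨φ, hφ⟩ := hx
  obtain ⟨K, ι, hι, t, T, hT, hagree⟩ := exists_trees φ
  have := Fintype.ofFinite ι
  rw [exp_eq h1]
  set L := -Real.log (1 - c) / 2 - c / 2 - c ^ 2 / 4 with hL
  have hp : Tendsto (fun n : ℕ => c / (n : ℝ)) atTop (𝓝 0) :=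
    tendsto_const_div_atTop_nhds_zero_nat c
  have hev : ∀ᶠ n : ℕ in atTop, 0 < n ∧ c / (n : ℝ) ≤ 1 := by
    filter_upwards [hp.eventually_lt_const one_pos, eventually_gt_atTop 0] with n hn hn0
    exact ⟨hn0, hn.le⟩
  have hφ' : Tendsto (fun n : ℕ => gProb n (c / n) (fun G => gSat G φ)) atTop (𝓝 x) := by
    refine hφ.congr' ?_
    filter_upwards [hev] with n hn
    rw [min_eq_right hn.2]
  have ha : Tendsto (fun n : ℕ => Real.exp (-L / (1 - c / n))) atTop (𝓝 (Real.exp (-L))) := by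
    have : Tendsto (fun n : ℕ => -L / (1 - c / (n : ℝ))) atTop (𝓝 (-L / (1 - 0))) :=
      tendsto_const_nhds.div (tendsto_const_nhds.sub hp) (by norm_num)
    rw [sub_zero, div_one] at this
    exact (Real.continuous_exp.tendsto _).comp this
  have hb : Tendsto (fun n : ℕ => ∑ i, gProb n (c / n) (fun G => copies (T i) G < K))
      atTop (𝓝 0) := by
    simpa using tendsto_finsetSum Finset.univ fun i _ => tendsto_copies_lt h0 (hT i) K
  -- if every typical forest has `A`, then `A` is asymptotically at least as likely as a forest
  have key : ∀ A : ∀ n, SimpleGraph (Fin n) → Prop,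
      (∀ n (G : SimpleGraph (Fin n)), G.IsAcyclic → (∀ i, K ≤ copies (T i) G) → A n G) →
      ∀ᶠ n : ℕ in atTop, Real.exp (-L / (1 - c / n)) ≤ gProb n (c / n) (A n) +
        ∑ i, gProb n (c / n) (fun G => copies (T i) G < K) := by
    intro A hA
    filter_upwards [hev] with n hn
    have hp0 : 0 ≤ c / (n : ℝ) := by positivity
    calc Real.exp (-L / (1 - c / n)) ≤ gProb n (c / n) (fun G => G.IsAcyclic) :=
          isAcyclic_lower h0 h1 hn.1
      _ ≤ gProb n (c / n) (fun G => A n G ∨ ∃ i, copies (T i) G < K) := by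
          refine gProb_mono hp0 hn.2 fun G hG => ?_
          by_cases h : ∃ i, copies (T i) G < K
          · exact Or.inr h
          · push Not at h
            exact Or.inl (hA n G hG h)
      _ ≤ gProb n (c / n) (A n) + gProb n (c / n) (fun G => ∃ i, copies (T i) G < K) :=
          gProb_or_le hp0 hn.2 _ _
      _ ≤ _ := by
          gcongr
          exact gProb_exists_le hp0 hn.2 _
  by_cases hex : ∃ (m : ℕ) (G : SimpleGraph (Fin m)),
      G.IsAcyclic ∧ (∀ i, K ≤ copies (T i) G) ∧ gSat G φ
  · right
    obtain ⟨m, G₀, hG₀, hc₀, hs⟩ := hex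
    have := le_of_tendsto_of_tendsto ha (hφ'.add hb)
      (key (fun n G => gSat G φ) fun n G hG hc => (hagree _ _ G₀ G hG₀ hG hc₀ hc).1 hs)
    simpa using this
  · left
    push Not at hex
    have hnot : Tendsto (fun n : ℕ => gProb n (c / n) (fun G => ¬ gSat G φ)) atTop
        (𝓝 (1 - x)) := by
      simp only [gProb_not]
      exact hφ'.const_sub 1
    have := le_of_tendsto_of_tendsto ha (hnot.add hb) (key (fun n G => ¬ gSat G φ) hex)
    linarith

/-- `e ^ (-f(c))` is strictly decreasing on `(0,1)`, by comparison of its power series. -/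
lemma exp_mul_sqrt_strictAnti {c d : ℝ} (h0 : 0 < c) (hcd : c < d) (h1 : d < 1) :
    Real.exp (d / 2 + d ^ 2 / 4) * Real.sqrt (1 - d) <
      Real.exp (c / 2 + c ^ 2 / 4) * Real.sqrt (1 - c) := by
  rw [exp_eq h1, exp_eq (hcd.trans h1), Real.exp_lt_exp, neg_lt_neg_iff]
  have hlt : ∀ k : ℕ, c ^ (k + 3) / (2 * (k + 3)) < d ^ (k + 3) / (2 * (k + 3)) := fun k =>
    div_lt_div_of_pos_right (pow_lt_pow_left₀ hcd h0.le (by omega)) (by positivity)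
  exact hasSum_lt (fun k => (hlt k).le) (hlt 0) (hasSum_cycles h0 (hcd.trans h1))
    (hasSum_cycles (h0.trans hcd) h1)

lemma exp_mul_sqrt_le_one {c : ℝ} (h0 : 0 < c) (h1 : c < 1) :
    Real.exp (c / 2 + c ^ 2 / 4) * Real.sqrt (1 - c) ≤ 1 := by
  rw [exp_eq h1, Real.exp_le_one_iff, neg_nonpos]
  exact (hasSum_cycles h0 h1).nonneg fun k => by positivity

end FOGap

/-- For `0 < c < c₀`, with `c₀` the solution of `e^{c/2+c²/4}√(1-c) = 1/2` in `(0,1)`: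
`1 - e^{-f(c)} < 1/2 < e^{-f(c)}`, the open interval `(1 - e^{-f(c)}, e^{-f(c)})` is disjoint
from the closure of the limiting probabilities, and in particular that closure has a gap
inside `[0,1]`. -/
theorem limFOProbs_gap (c₀ : ℝ) (hc₀0 : 0 < c₀) (hc₀1 : c₀ < 1)
    (heq : Real.exp (c₀ / 2 + c₀ ^ 2 / 4) * Real.sqrt (1 - c₀) = 1 / 2)
    (c : ℝ) (hc0 : 0 < c) (hcc : c < c₀) :
    (1 - Real.exp (c / 2 + c ^ 2 / 4) * Real.sqrt (1 - c) < 1 / 2 ∧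
      (1 : ℝ) / 2 < Real.exp (c / 2 + c ^ 2 / 4) * Real.sqrt (1 - c)) ∧
    Set.Ioo (1 - Real.exp (c / 2 + c ^ 2 / 4) * Real.sqrt (1 - c))
        (Real.exp (c / 2 + c ^ 2 / 4) * Real.sqrt (1 - c)) ∩ closure (limFOProbs c) = ∅ ∧
    ∃ a b : ℝ, 0 ≤ a ∧ a < b ∧ b ≤ 1 ∧ Set.Ioo a b ∩ closure (limFOProbs c) = ∅ := by
  have hc1 : c < 1 := hcc.trans hc₀1
  have hhalf := FOGap.exp_mul_sqrt_strictAnti hc0 hcc hc₀1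
  rw [heq] at hhalf
  have hgap : Set.Ioo (1 - Real.exp (c / 2 + c ^ 2 / 4) * Real.sqrt (1 - c))
      (Real.exp (c / 2 + c ^ 2 / 4) * Real.sqrt (1 - c)) ∩ closure (limFOProbs c) = ∅ := by
    rw [← Set.disjoint_iff_inter_eq_empty]
    refine Disjoint.closure_right (Set.disjoint_left.2 fun x hx hxL => ?_) isOpen_Ioo
    rcases FOGap.limFOProbs_dichotomy hc0 hc1 hxL with h | h
    · exact absurd hx.1 h.not_gt
    · exact absurd hx.2 h.not_gt
  have hle := FOGap.exp_mul_sqrt_le_one hc0 hc1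
  exact ⟨⟨by linarith, hhalf⟩, hgap, _, _, by linarith, by linarith, hle, hgap⟩
end
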